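/- Let l divide n. The elements π(e_{lp, l(q−1)+1}^{(l+k−1)}) and π(f_{lp, l(q−1)+1}^{(l+k−1)}), for 1 ≤ p,q ≤ n/l and 1 ≤ k ≤ l, lie in the finite W-algebra W_χ and generate W_χ as an algebra. -/

import Mathlib

noncomputable section
open scoped Classical

/-! # The universal enveloping superalgebra `U(Q(n))` of the queer Lie superalgebra

`U(Q(n))` is presented by even generators `e i j` and odd generators `f i j`
(`1 ≤ i,j ≤ n`) subject to the relations
`[e i j, e k l] = δ_{jk} e i l - δ_{li} e k j`,
`[e i j, f k l] = δ_{jk} f i l - δ_{li} f k j`,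
`f i j * f k l + f k l * f i j = δ_{jk} e i l + δ_{li} e k j`. -/

/-- Generators of `U(Q(n))`: `E i j` (even) and `F i j` (odd). -/
inductive QGen (n : ℕ) : Type
  | E : Fin n → Fin n → QGen n
  | F : Fin n → Fin n → QGen n

/-- Kronecker delta. -/
def kd {n : ℕ} (i j : Fin n) : ℂ := if i = j then 1 else 0

/-- The defining relations of `U(Q(n))`. -/
inductive QRel (n : ℕ) : FreeAlgebra ℂ (QGen n) → FreeAlgebra ℂ (QGen n) → Prop
  | ee (i j k l : Fin n) : QRel n
      (FreeAlgebra.ι ℂ (QGen.E i j) * FreeAlgebra.ι ℂ (QGen.E k l) -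
        FreeAlgebra.ι ℂ (QGen.E k l) * FreeAlgebra.ι ℂ (QGen.E i j))
      (kd j k • FreeAlgebra.ι ℂ (QGen.E i l) - kd l i • FreeAlgebra.ι ℂ (QGen.E k j))
  | ef (i j k l : Fin n) : QRel n
      (FreeAlgebra.ι ℂ (QGen.E i j) * FreeAlgebra.ι ℂ (QGen.F k l) -
        FreeAlgebra.ι ℂ (QGen.F k l) * FreeAlgebra.ι ℂ (QGen.E i j))
      (kd j k • FreeAlgebra.ι ℂ (QGen.F i l) - kd l i • FreeAlgebra.ι ℂ (QGen.F k j))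
  | ff (i j k l : Fin n) : QRel n
      (FreeAlgebra.ι ℂ (QGen.F i j) * FreeAlgebra.ι ℂ (QGen.F k l) +
        FreeAlgebra.ι ℂ (QGen.F k l) * FreeAlgebra.ι ℂ (QGen.F i j))
      (kd j k • FreeAlgebra.ι ℂ (QGen.E i l) + kd l i • FreeAlgebra.ι ℂ (QGen.E k j))

/-- The universal enveloping superalgebra `U(Q(n))`. -/
abbrev UQ (n : ℕ) := RingQuot (QRel n)

/-- The generator `e i j` of `U(Q(n))`. -/
def Ue {n : ℕ} (i j : Fin n) : UQ n :=
  RingQuot.mkAlgHom ℂ (QRel n) (FreeAlgebra.ι ℂ (QGen.E i j))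

/-- The generator `f i j` of `U(Q(n))`. -/
def Uf {n : ℕ} (i j : Fin n) : UQ n :=
  RingQuot.mkAlgHom ℂ (QRel n) (FreeAlgebra.ι ℂ (QGen.F i j))

/-- Sergeev's elements `e_{ij}^{(m)}` and `f_{ij}^{(m)}` of `U(Q(n))`, defined recursively by
`e^{(0)} = δ`, `f^{(0)} = 0`,
`e_{ij}^{(m)} = Σ_k e_{ik} e_{kj}^{(m-1)} + (-1)^{m+1} Σ_k f_{ik} f_{kj}^{(m-1)}`,
`f_{ij}^{(m)} = Σ_k e_{ik} f_{kj}^{(m-1)} + (-1)^{m+1} Σ_k f_{ik} e_{kj}^{(m-1)}`. -/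
def efU (n : ℕ) : ℕ → (Fin n → Fin n → UQ n) × (Fin n → Fin n → UQ n)
  | 0 => (fun i j => algebraMap ℂ (UQ n) (kd i j), fun _ _ => 0)
  | m + 1 =>
      (fun i j => (∑ k, Ue i k * (efU n m).1 k j) +
        (-1 : ℂ) ^ m • ∑ k, Uf i k * (efU n m).2 k j,
       fun i j => (∑ k, Ue i k * (efU n m).2 k j) +
        (-1 : ℂ) ^ m • ∑ k, Uf i k * (efU n m).1 k j)

/-- `e_{ij}^{(m)}`. -/
def eU {n : ℕ} (m : ℕ) (i j : Fin n) : UQ n := (efU n m).1 i j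
/-- `f_{ij}^{(m)}`. -/
def fU {n : ℕ} (m : ℕ) (i j : Fin n) : UQ n := (efU n m).2 i j

/-- For `l ∣ n`, the index `l(p-1)+i` of `{1,…,n}` (0-based: block `p`, position `i`). -/
def bidx {n l : ℕ} (h : l ∣ n) (p : Fin (n / l)) (i : Fin l) : Fin n :=
  ⟨l * p.val + i.val, by
    have h1 : i.val < l := i.isLt
    have h2 : p.val + 1 ≤ n / l := p.isLt
    have h3 : l * (p.val + 1) ≤ l * (n / l) := Nat.mul_le_mul_left l h2
    have h4 : n / l * l ≤ n := Nat.div_mul_le_self n l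
    have h5 : l * (p.val + 1) = l * p.val + l := Nat.mul_succ l p.val
    have h6 : l * (n / l) = n / l * l := Nat.mul_comm l (n / l)
    omega⟩
set_option linter.unusedVariables false

/-! # The character `χ`, the left ideal `I_χ` and the finite W-algebra data

Here `l ∣ n` and `χ` corresponds to the even nilpotent element of `Q(n)` all of whose
Jordan blocks have size `l`.  The subalgebra `m = ⊕_{j<0} g_j` is spanned by the
elements `e_{l(p-1)+i+k, l(q-1)+i}` and `f_{l(p-1)+i+k, l(q-1)+i}` (`k ≥ 1`), and
`χ(e_{l(p-1)+i+1, l(q-1)+i}) = δ_{pq}` and `χ = 0` on the other basis elements. -/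

/-- The set of elements `a - χ(a)` for `a` ranging over the standard basis of `m`;
(rows/columns written 0-based: `a` is the position of the row inside its block `p`,
`b` the position of the column inside its block `q`, with `b < a`). -/
def mSet (n l : ℕ) (h : l ∣ n) : Set (UQ n) :=
  { x : UQ n | ∃ (p q : Fin (n / l)) (a b : Fin l), b.val < a.val ∧
      (x = Ue (bidx h p a) (bidx h q b) -
            algebraMap ℂ (UQ n) (if a.val = b.val + 1 ∧ p = q then 1 else 0) ∨
       x = Uf (bidx h p a) (bidx h q b)) }

/-- The left ideal `I_χ` of `U(Q(n))` generated by the `a - χ(a)`, `a ∈ m`. -/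
def Ichi (n l : ℕ) (h : l ∣ n) : Submodule (UQ n) (UQ n) :=
  Submodule.span (UQ n) (mSet n l h)

/-- The quotient `U(Q(n))/I_χ` (as a `ℂ`-vector space). -/
abbrev Wq (n l : ℕ) (h : l ∣ n) := UQ n ⧸ (Ichi n l h).restrictScalars ℂ

/-- The quotient map `π : U(Q(n)) → U(Q(n))/I_χ`. -/
def piq (n l : ℕ) (h : l ∣ n) : UQ n →ₗ[ℂ] Wq n l h :=
  ((Ichi n l h).restrictScalars ℂ).mkQ

/-- `y` super-commutes with `m` into `I_χ`:  `[a, y] ∈ I_χ` for every `a` in the standard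
basis of `m`.  Here the super-commutator of the odd element `f` with (the possibly
non-homogeneous) `y` is `f * y - σ(y) * f`, where `σ` is the parity involution of
`U(Q(n))` (the algebra automorphism fixing the `e`'s and negating the `f`'s). -/
def Wcond {n l : ℕ} (h : l ∣ n) (σ : UQ n →ₐ[ℂ] UQ n) (y : UQ n) : Prop :=
  ∀ (p q : Fin (n / l)) (a b : Fin l), b.val < a.val →
    (Ue (bidx h p a) (bidx h q b) * y - y * Ue (bidx h p a) (bidx h q b) ∈ Ichi n l h) ∧
    (Uf (bidx h p a) (bidx h q b) * y - σ y * Uf (bidx h p a) (bidx h q b) ∈ Ichi n l h)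

/-- The finite W-algebra `W_χ = {π(y) | [a, y] ∈ I_χ for all a ∈ m}`, as a subset of
`U(Q(n))/I_χ`.  (Its product is `π(y₁)·π(y₂) = π(y₁y₂)`.) -/
def WchiSet (n l : ℕ) (h : l ∣ n) (σ : UQ n →ₐ[ℂ] UQ n) : Set (Wq n l h) :=
  { w : Wq n l h | ∃ y : UQ n, Wcond h σ y ∧ piq n l h y = w }

/-- The standard basis elements of the parabolic subalgebra `p = ⊕_{j≥0} g_j`. -/
def pSet (n l : ℕ) (h : l ∣ n) : Set (UQ n) :=
  { x : UQ n | ∃ (p q : Fin (n / l)) (a b : Fin l), a.val ≤ b.val ∧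
      (x = Ue (bidx h p a) (bidx h q b) ∨ x = Uf (bidx h p a) (bidx h q b)) }

/-- The standard basis elements of the nilradical `n = ⊕_{j>0} g_j` of `p`. -/
def nSet (n l : ℕ) (h : l ∣ n) : Set (UQ n) :=
  { x : UQ n | ∃ (p q : Fin (n / l)) (a b : Fin l), a.val < b.val ∧
      (x = Ue (bidx h p a) (bidx h q b) ∨ x = Uf (bidx h p a) (bidx h q b)) }

/-- The kernel of the Harish-Chandra projection `ϑ : U(p) → U(g₀)`, realized inside
`U(Q(n))`: the `ℂ`-span of `U(p)·n`.  (By the PBW theorem, `U(g) = U(p) ⊕ I_χ` and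
`U(p) = U(g₀) ⊕ U(p)n`, so for `y ∈ U(g)`, `ϑ(pr(y)) = t` iff
`y - t ∈ I_χ + U(p)n`.) -/
def Lspan (n l : ℕ) (h : l ∣ n) : Submodule ℂ (UQ n) :=
  Submodule.span ℂ
    { x : UQ n | ∃ u ∈ Algebra.adjoin ℂ (pSet n l h), ∃ g ∈ nSet n l h, x = u * g }

/-- A descriptor of a generator of `U(p)`:  `(b, p, q, a, c)` is
`e_{l(p-1)+(a+1), l(q-1)+(c+1)}` if `b = false` and `f_{…}` if `b = true`
(required: `a ≤ c`). -/
def pgElem {n l : ℕ} (h : l ∣ n) :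
    Bool × Fin (n / l) × Fin (n / l) × Fin l × Fin l → UQ n
  | (b, p, q, a, c) => (if b then Uf else Ue) (bidx h p a) (bidx h q c)

/-- Kazhdan degree `2k+2` of a `p`-generator of block offset `k = c - a`. -/
def pgDeg {l m : ℕ} (d : Bool × Fin m × Fin m × Fin l × Fin l) : ℕ :=
  2 * (d.2.2.2.2.val - d.2.2.2.1.val) + 2

/-- Weight `2k` of a `p`-generator of block offset `k = c - a`. -/
def pgWt {l m : ℕ} (d : Bool × Fin m × Fin m × Fin l × Fin l) : ℕ :=
  2 * (d.2.2.2.2.val - d.2.2.2.1.val)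

/-- Monomials in the generators of `U(p)` which are "lower" than bidegree
(Kazhdan degree `D`, weight `W`): either of Kazhdan degree `< D`, or of Kazhdan
degree `≤ D` and weight `< W`. -/
def LowSet (n l : ℕ) (h : l ∣ n) (D W : ℕ) : Set (UQ n) :=
  { x : UQ n | ∃ L : List (Bool × Fin (n / l) × Fin (n / l) × Fin l × Fin l),
      (∀ d ∈ L, d.2.2.2.1.val ≤ d.2.2.2.2.val) ∧
      x = (L.map (pgElem h)).prod ∧
      ((L.map pgDeg).sum < D ∨ ((L.map pgDeg).sum ≤ D ∧ (L.map pgWt).sum < W)) }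

/-- The span of the "lower" monomials. -/
def LowSpan (n l : ℕ) (h : l ∣ n) (D W : ℕ) : Submodule ℂ (UQ n) :=
  Submodule.span ℂ (LowSet n l h D W)

/-! # The super tensor power `U(Q(m))^{⊗l}`

Modeled as the superalgebra with generators `x^i_{pq} = 1^{⊗(l-i)} ⊗ e_{pq} ⊗ 1^{⊗(i-1)}`
(even) and `ξ^i_{pq} = 1^{⊗(l-i)} ⊗ f_{pq} ⊗ 1^{⊗(i-1)}` (odd), subject to the `U(Q(m))`
relations in each tensor slot and to (super-)commutation between different slots. -/

/-- Generators of `U(Q(m))^{⊗l}`: `X i p q` is `x^i_{pq}` and `Xi i p q` is `ξ^i_{pq}`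
(`i : Fin l` is the 0-based tensor slot, counted from the right). -/
inductive TGen (m l : ℕ) : Type
  | X : Fin l → Fin m → Fin m → TGen m l
  | Xi : Fin l → Fin m → Fin m → TGen m l

/-- Kronecker delta on slots. -/
def kdl {l : ℕ} (i j : Fin l) : ℂ := if i = j then 1 else 0

/-- The defining relations of `U(Q(m))^{⊗l}`. -/
inductive TRel (m l : ℕ) : FreeAlgebra ℂ (TGen m l) → FreeAlgebra ℂ (TGen m l) → Prop
  | xx (i i' : Fin l) (p q r s : Fin m) : TRel m l
      (FreeAlgebra.ι ℂ (TGen.X i p q) * FreeAlgebra.ι ℂ (TGen.X i' r s) -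
        FreeAlgebra.ι ℂ (TGen.X i' r s) * FreeAlgebra.ι ℂ (TGen.X i p q))
      ((kdl i i' * kd q r) • FreeAlgebra.ι ℂ (TGen.X i p s) -
        (kdl i i' * kd s p) • FreeAlgebra.ι ℂ (TGen.X i' r q))
  | xxi (i i' : Fin l) (p q r s : Fin m) : TRel m l
      (FreeAlgebra.ι ℂ (TGen.X i p q) * FreeAlgebra.ι ℂ (TGen.Xi i' r s) -
        FreeAlgebra.ι ℂ (TGen.Xi i' r s) * FreeAlgebra.ι ℂ (TGen.X i p q))
      ((kdl i i' * kd q r) • FreeAlgebra.ι ℂ (TGen.Xi i p s) -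
        (kdl i i' * kd s p) • FreeAlgebra.ι ℂ (TGen.Xi i' r q))
  | xixi (i i' : Fin l) (p q r s : Fin m) : TRel m l
      (FreeAlgebra.ι ℂ (TGen.Xi i p q) * FreeAlgebra.ι ℂ (TGen.Xi i' r s) +
        FreeAlgebra.ι ℂ (TGen.Xi i' r s) * FreeAlgebra.ι ℂ (TGen.Xi i p q))
      ((kdl i i' * kd q r) • FreeAlgebra.ι ℂ (TGen.X i p s) +
        (kdl i i' * kd s p) • FreeAlgebra.ι ℂ (TGen.X i' r q))

/-- The superalgebra `U(Q(m))^{⊗l}`. -/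
abbrev TQ (m l : ℕ) := RingQuot (TRel m l)

/-- `x^i_{pq} := 1^{⊗(l-i)} ⊗ e_{pq} ⊗ 1^{⊗(i-1)} ∈ U(Q(m))^{⊗l}`. -/
def xT {m l : ℕ} (i : Fin l) (p q : Fin m) : TQ m l :=
  RingQuot.mkAlgHom ℂ (TRel m l) (FreeAlgebra.ι ℂ (TGen.X i p q))

/-- `ξ^i_{pq} := 1^{⊗(l-i)} ⊗ f_{pq} ⊗ 1^{⊗(i-1)} ∈ U(Q(m))^{⊗l}`. -/
def xiT {m l : ℕ} (i : Fin l) (p q : Fin m) : TQ m l :=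
  RingQuot.mkAlgHom ℂ (TRel m l) (FreeAlgebra.ι ℂ (TGen.Xi i p q))

/-! # The super-Yangian `Y(Q(n))` -/

/-- The index set `{±1, …, ±n}`:  `(false, a)` is the positive index `a` (even),
`(true, a)` is the negative index `-a` (odd). -/
abbrev QIdx (n : ℕ) := Bool × Fin n

/-- Negation `i ↦ -i` on indices. -/
def qneg {n : ℕ} (i : QIdx n) : QIdx n := (!i.1, i.2)

/-- The parity `p(i)`: `0` for positive `i`, `1` for negative `i`. -/
def qpar {n : ℕ} (i : QIdx n) : ℕ := if i.1 then 1 else 0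

/-- Kronecker delta on `{±1, …, ±n}`. -/
def kdq {n : ℕ} (i j : QIdx n) : ℂ := if i = j then 1 else 0

/-- Generators of `Y(Q(n))`: `T m i j` encodes `T^{(m+1)}_{i,j}`. -/
inductive YGen (n : ℕ) : Type
  | T : ℕ → QIdx n → QIdx n → YGen n

/-- `T^{(m)}_{i,j}` in the free algebra, with `T^{(0)}_{i,j} = δ_{ij}`. -/
def Tf {n : ℕ} : ℕ → QIdx n → QIdx n → FreeAlgebra ℂ (YGen n)
  | 0, i, j => algebraMap ℂ _ (kdq i j)
  | m + 1, i, j => FreeAlgebra.ι ℂ (YGen.T m i j)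

/-- The super-commutator `[T^{(a)}_{i,j}, T^{(b)}_{k,l}]` in the free algebra. -/
def ybr {n : ℕ} (a : ℕ) (i j : QIdx n) (b : ℕ) (k l : QIdx n) :
    FreeAlgebra ℂ (YGen n) :=
  Tf a i j * Tf b k l -
    ((-1 : ℂ) ^ ((qpar i + qpar j) * (qpar k + qpar l))) • (Tf b k l * Tf a i j)

/-- The defining relations of the super-Yangian `Y(Q(n))`: for `M, R ≥ 1`,
`(-1)^{p(i)p(k)+p(i)p(l)+p(k)p(l)} ([T^{(M+1)}_{ij}, T^{(R-1)}_{kl}] - [T^{(M-1)}_{ij}, T^{(R+1)}_{kl}])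
 = T^{(M)}_{kj}T^{(R-1)}_{il} + T^{(M-1)}_{kj}T^{(R)}_{il} - T^{(R-1)}_{kj}T^{(M)}_{il}
   - T^{(R)}_{kj}T^{(M-1)}_{il}
   + (-1)^{p(k)+p(l)} (-T^{(M)}_{-k,j}T^{(R-1)}_{-i,l} + T^{(M-1)}_{-k,j}T^{(R)}_{-i,l}
       + T^{(R-1)}_{k,-j}T^{(M)}_{i,-l} - T^{(R)}_{k,-j}T^{(M-1)}_{i,-l})`
(here `M = m+1`, `R = r+1`), together with `T^{(m)}_{-i,-j} = (-1)^m T^{(m)}_{i,j}`. -/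
inductive YRel (n : ℕ) : FreeAlgebra ℂ (YGen n) → FreeAlgebra ℂ (YGen n) → Prop
  | quad (m r : ℕ) (i j k l : QIdx n) : YRel n
      (((-1 : ℂ) ^ (qpar i * qpar k + qpar i * qpar l + qpar k * qpar l)) •
        (ybr (m + 2) i j r k l - ybr m i j (r + 2) k l))
      (Tf (m + 1) k j * Tf r i l + Tf m k j * Tf (r + 1) i l -
        Tf r k j * Tf (m + 1) i l - Tf (r + 1) k j * Tf m i l +
        ((-1 : ℂ) ^ (qpar k + qpar l)) •
          (-(Tf (m + 1) (qneg k) j * Tf r (qneg i) l) +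
            Tf m (qneg k) j * Tf (r + 1) (qneg i) l +
            Tf r k (qneg j) * Tf (m + 1) i (qneg l) -
            Tf (r + 1) k (qneg j) * Tf m i (qneg l)))
  | par (m : ℕ) (i j : QIdx n) : YRel n
      (Tf (m + 1) (qneg i) (qneg j)) (((-1 : ℂ) ^ (m + 1)) • Tf (m + 1) i j)

/-- The super-Yangian `Y(Q(n))`. -/
abbrev YQ (n : ℕ) := RingQuot (YRel n)

/-- The generator `T^{(m)}_{i,j}` of `Y(Q(n))` (with `T^{(0)}_{i,j} = δ_{ij}`). -/
def TY {n : ℕ} (m : ℕ) (i j : QIdx n) : YQ n :=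
  RingQuot.mkAlgHom ℂ (YRel n) (Tf m i j)

/-! # Values of the homomorphisms `U`, `ev`, `ēv` on the generators of `Y(Q(n))`,
and the explicit sums appearing in the main theorems. -/

/-- The value of the homomorphism `U : Y(Q(n)) → U(Q(n))` on the generator
`T^{(r)}_{i,j}`:  `U(T^{(r)}_{i,j}) = (-1)^r e^{(r)}_{j,i}`,
`U(T^{(r)}_{-i,j}) = (-1)^r f^{(r)}_{j,i}` for `i, j > 0`, and the values on the other
generators are forced by `T^{(r)}_{-i,-j} = (-1)^r T^{(r)}_{i,j}`. -/
def Uval {n : ℕ} (r : ℕ) (i j : QIdx n) : UQ n :=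
  (if j.1 then (-1 : ℂ) ^ r else 1) •
    ((-1 : ℂ) ^ r • (if xor i.1 j.1 then fU r j.2 i.2 else eU r j.2 i.2))

/-- The value of the evaluation homomorphism `ev : Y(Q(n)) → U(Q(n))` on `T^{(r)}_{i,j}`:
`ev(T^{(1)}_{i,j}) = -e_{j,i}`, `ev(T^{(1)}_{-i,j}) = -f_{j,i}` for `i, j > 0`,
`ev(T^{(0)}_{i,j}) = δ_{ij}` and `ev(T^{(r)}_{i,j}) = 0` for `r > 1` (with the values on
the remaining generators forced by `T^{(r)}_{-i,-j} = (-1)^r T^{(r)}_{i,j}`). -/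
def evval {n : ℕ} (r : ℕ) (i j : QIdx n) : UQ n :=
  (if j.1 then (-1 : ℂ) ^ r else 1) •
    (match r with
      | 0 => if xor i.1 j.1 then 0 else algebraMap ℂ (UQ n) (kd i.2 j.2)
      | 1 => -(if xor i.1 j.1 then Uf j.2 i.2 else Ue j.2 i.2)
      | _ + 2 => 0)

/-- The value of `ēv = α ∘ ev : Y(Q(n)) → U(Q(n))` on `T^{(r)}_{i,j}`, where `α` is the
principal anti-automorphism of `U(Q(n))`:  `ēv(T^{(1)}_{i,j}) = e_{j,i}`,
`ēv(T^{(1)}_{-i,j}) = f_{j,i}` for `i, j > 0`, `ēv(T^{(0)}_{i,j}) = δ_{ij}`,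
`ēv(T^{(r)}_{i,j}) = 0` for `r > 1`. -/
def bevval {n : ℕ} (r : ℕ) (i j : QIdx n) : UQ n :=
  (if j.1 then (-1 : ℂ) ^ r else 1) •
    (match r with
      | 0 => if xor i.1 j.1 then 0 else algebraMap ℂ (UQ n) (kd i.2 j.2)
      | 1 => (if xor i.1 j.1 then Uf j.2 i.2 else Ue j.2 i.2)
      | _ + 2 => 0)

/-- The sum `Σ_{p_1,…,p_{r-1}} Σ_{l ≥ i_1 ≥ i_2 ≥ … ≥ i_r ≥ 1}
Π_{a=1}^r (x^{i_a}_{p_{a-1},p_a} + (-1)^{r-a} ξ^{i_a}_{p_{a-1},p_a})`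
(with `p_0 = p`, `p_r = q`), an element of `U(Q(m))^{⊗l}`. -/
def chainProdDec (m l : ℕ) (r : ℕ) (p q : Fin m) : TQ m l :=
  ∑ c : Fin (r + 1) → Fin m, ∑ iv : Fin r → Fin l,
    (if c 0 = p ∧ c (Fin.last r) = q ∧ (∀ a b : Fin r, a ≤ b → iv b ≤ iv a)
      then (1 : ℂ) else 0) •
      (List.ofFn fun a : Fin r =>
        xT (iv a) (c a.castSucc) (c a.succ) +
          ((-1 : ℂ) ^ (r - 1 - a.val)) • xiT (iv a) (c a.castSucc) (c a.succ)).prod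

/-- The sum `Σ_{p_1,…,p_{r-1}} Σ_{1 ≤ i_1 < i_2 < … < i_r ≤ l}
Π_{a=1}^r (x^{i_a}_{p_{a-1},p_a} + (-1)^{r-a} ξ^{i_a}_{p_{a-1},p_a})`
(with `p_0 = p`, `p_r = q`), an element of `U(Q(m))^{⊗l}`. -/
def chainProdInc (m l : ℕ) (r : ℕ) (p q : Fin m) : TQ m l :=
  ∑ c : Fin (r + 1) → Fin m, ∑ iv : Fin r → Fin l,
    (if c 0 = p ∧ c (Fin.last r) = q ∧ (∀ a b : Fin r, a < b → iv a < iv b)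
      then (1 : ℂ) else 0) •
      (List.ofFn fun a : Fin r =>
        xT (iv a) (c a.castSucc) (c a.succ) +
          ((-1 : ℂ) ^ (r - 1 - a.val)) • xiT (iv a) (c a.castSucc) (c a.succ)).prod

/-- The elements `z^{(r)}_{±q,p}` of `U(Q(m))^{⊗l}`:  the even (`sgn = false`,
giving `z^{(r)}_{q,p}`) resp. odd (`sgn = true`, giving `z^{(r)}_{-q,p}`) component of
`chainProdDec`, computed using the parity involution `σT` of `U(Q(m))^{⊗l}`;
`z^{(0)}_{q,p} = δ_{qp}`, `z^{(0)}_{-q,p} = 0`. -/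
def zDec {m l : ℕ} (σT : TQ m l →ₐ[ℂ] TQ m l) :
    ℕ → Bool → Fin m → Fin m → TQ m l
  | 0, sgn, q, p => if sgn then 0 else algebraMap ℂ (TQ m l) (kd q p)
  | r + 1, sgn, q, p =>
      (2⁻¹ : ℂ) • (chainProdDec m l (r + 1) p q +
        (if sgn then (-1 : ℂ) else 1) • σT (chainProdDec m l (r + 1) p q))

/-- The elements `z̃^{(r)}_{±q,p}` of `U(Q(m))^{⊗l}` (as `zDec`, with increasing chains). -/
def zInc {m l : ℕ} (σT : TQ m l →ₐ[ℂ] TQ m l) :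
    ℕ → Bool → Fin m → Fin m → TQ m l
  | 0, sgn, q, p => if sgn then 0 else algebraMap ℂ (TQ m l) (kd q p)
  | r + 1, sgn, q, p =>
      (2⁻¹ : ℂ) • (chainProdInc m l (r + 1) p q +
        (if sgn then (-1 : ℂ) else 1) • σT (chainProdInc m l (r + 1) p q))

/-- The explicit formula for the antipode value `S(T^{(r)}_{i,j})` (`r ≥ 1`):
`S(T^{(r)}_{i,j}) = Σ_{m=1}^{r} (-1)^m Σ_{i_1,…,i_{m-1}} Σ_{r_1+⋯+r_m=r, r_a>0}
(-1)^{ν(i,i_1,…,i_{m-1},j)} T^{(r_1)}_{i,i_1} ⋯ T^{(r_m)}_{i_{m-1},j}` where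
`ν(i_0,…,i_m) = Σ_{0≤k<s≤m-1} (p(i_k)+p(i_{k+1}))(p(i_s)+p(i_{s+1}))`. -/
def STval {n : ℕ} (r : ℕ) (i j : QIdx n) : YQ n :=
  ∑ m : Fin r,
    ((-1 : ℂ) ^ (m.val + 1)) •
      ∑ ch : Fin (m.val + 2) → QIdx n, ∑ c : Fin (m.val + 1) → Fin (r + 1),
        (if ch 0 = i ∧ ch (Fin.last (m.val + 1)) = j ∧ (∀ a, 1 ≤ (c a).val) ∧
              (∑ a, (c a).val) = r
          then ((-1 : ℂ) ^ (∑ a : Fin (m.val + 1), ∑ b : Fin (m.val + 1),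
              if a < b then
                (qpar (ch a.castSucc) + qpar (ch a.succ)) *
                  (qpar (ch b.castSucc) + qpar (ch b.succ))
              else 0))
          else 0) •
        (List.ofFn fun a : Fin (m.val + 1) =>
          TY (c a).val (ch a.castSucc) (ch a.succ)).prod


set_option linter.unusedSectionVars false

/-! # Part A: abstract filtered setting -/

/-- Generators: parity, row, column. -/
abbrev Gn (n : ℕ) := Bool × Fin n × Fin n

/-- Koszul sign. -/
def sg (α β : Bool) : ℂ := if α && β then -1 else 1

/-- Position inside the block. -/
def ps (l : ℕ) {n : ℕ} (i : Fin n) : ℕ := i.val % l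

/-- Weight of a generator. -/
def wtg (l : ℕ) {n : ℕ} (d : Gn n) : ℤ :=
  if ps l d.2.1 ≤ ps l d.2.2 then 2 * ((ps l d.2.2 : ℤ) - ps l d.2.1) + 1
  else 2 * ((ps l d.2.2 : ℤ) - ps l d.2.1) + 2

/-- The character. -/
def chg (l : ℕ) {n : ℕ} (d : Gn n) : ℂ :=
  if ps l d.2.2 < ps l d.2.1 ∧ d.1 = false ∧ d.2.1.val = d.2.2.val + 1 then 1 else 0

/-- Weight of a word. -/
def wl (l : ℕ) {n : ℕ} : List (Gn n) → ℤ
  | [] => 0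
  | d :: ds => wtg l d + wl l ds

/-- Parity of a word. -/
def pw {n : ℕ} : List (Gn n) → Bool
  | [] => false
  | d :: ds => xor d.1 (pw ds)

/-- The relations. -/
def QR {n : ℕ} {A : Type*} [Ring A] [Algebra ℂ A] (γ : Gn n → A) : Prop :=
  ∀ (α : Bool) (i j : Fin n) (β : Bool) (k m : Fin n),
    γ (α, i, j) * γ (β, k, m) = sg α β • (γ (β, k, m) * γ (α, i, j)) +
      kd j k • γ (xor α β, i, m) - (sg α β * kd m i) • γ (xor α β, k, j)

section abstractA
variable {n : ℕ} {A : Type*} [Ring A] [Algebra ℂ A]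

/-- Product of a word. -/
def wp (γ : Gn n → A) (ds : List (Gn n)) : A := (ds.map γ).prod

/-- Span of the words satisfying `S`. -/
def wsp (γ : Gn n → A) (S : List (Gn n) → Prop) : Submodule ℂ A :=
  Submodule.span ℂ {x | ∃ ds, S ds ∧ x = wp γ ds}

theorem wp_nil (γ : Gn n → A) : wp γ [] = 1 := by simp [wp]
theorem wp_cons (γ : Gn n → A) (d : Gn n) (ds : List (Gn n)) :
    wp γ (d :: ds) = γ d * wp γ ds := by simp [wp]
theorem wp_append (γ : Gn n → A) (ds es : List (Gn n)) :
    wp γ (ds ++ es) = wp γ ds * wp γ es := by simp [wp]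
theorem wl_append (l : ℕ) (ds es : List (Gn n)) : wl l (ds ++ es) = wl l ds + wl l es := by
  induction ds with
  | nil => simp [wl]
  | cons d ds ih => simp [wl, ih, add_assoc]
theorem pw_append (ds es : List (Gn n)) : pw (ds ++ es) = xor (pw ds) (pw es) := by
  induction ds with
  | nil => simp [pw]
  | cons d ds ih => simp [pw, ih]

theorem sg_comm (α β : Bool) : sg α β = sg β α := by cases α <;> cases β <;> simp [sg]
theorem sg_sq (α β : Bool) : sg α β * sg α β = 1 := by cases α <;> cases β <;> simp [sg]
theorem sg_xor (α β δ : Bool) : sg α (xor β δ) = sg α β * sg α δ := by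
  cases α <;> cases β <;> cases δ <;> simp [sg]
theorem sg_xor' (α β δ : Bool) : sg (xor α β) δ = sg α δ * sg β δ := by
  cases α <;> cases β <;> cases δ <;> simp [sg]

theorem wsp_mem (γ : Gn n → A) {S : List (Gn n) → Prop} {ds : List (Gn n)} (h : S ds) :
    wp γ ds ∈ wsp γ S := Submodule.subset_span ⟨ds, h, rfl⟩

theorem wsp_mono (γ : Gn n → A) {S S' : List (Gn n) → Prop} (h : ∀ ds, S ds → S' ds) :
    wsp γ S ≤ wsp γ S' := by
  apply Submodule.span_mono
  rintro x ⟨ds, h1, rfl⟩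
  exact ⟨ds, h ds h1, rfl⟩

theorem wsp_mul (γ : Gn n → A) {S S' S'' : List (Gn n) → Prop}
    (h : ∀ ds es, S ds → S' es → S'' (ds ++ es)) {x y : A} (hx : x ∈ wsp γ S)
    (hy : y ∈ wsp γ S') : x * y ∈ wsp γ S'' := by
  have h1 : x * y ∈ wsp γ S * wsp γ S' := Submodule.mul_mem_mul hx hy
  have h2 : wsp γ S * wsp γ S' ≤ wsp γ S'' := by
    unfold wsp
    rw [Submodule.span_mul_span]
    apply Submodule.span_le.2
    rintro _ ⟨_, ⟨ds, h1, rfl⟩, _, ⟨es, h2, rfl⟩, rfl⟩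
    simp only [← wp_append]
    exact wsp_mem γ (h _ _ h1 h2)
  exact h2 h1

theorem wp_single (γ : Gn n → A) (d : Gn n) : γ d = wp γ [d] := by simp [wp]

/-- Words of weight at most `w` and parity `α`. -/
def VV (l : ℕ) (γ : Gn n → A) (w : ℤ) (α : Bool) : Submodule ℂ A :=
  wsp γ (fun ds => wl l ds ≤ w ∧ pw ds = α)

/-- Words of weight at most `w`. -/
def UU (l : ℕ) (γ : Gn n → A) (w : ℤ) : Submodule ℂ A :=
  wsp γ (fun ds => wl l ds ≤ w)

theorem VV_le_UU (l : ℕ) (γ : Gn n → A) {w w' : ℤ} (h : w ≤ w') (α : Bool) :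
    VV l γ w α ≤ UU l γ w' := wsp_mono γ (fun _ h' => h'.1.trans h)
theorem UU_mono (l : ℕ) (γ : Gn n → A) {w w' : ℤ} (h : w ≤ w') :
    UU l γ w ≤ UU l γ w' := wsp_mono γ (fun _ h' => h'.trans h)
theorem VV_mono (l : ℕ) (γ : Gn n → A) {w w' : ℤ} (h : w ≤ w') (α : Bool) :
    VV l γ w α ≤ VV l γ w' α := wsp_mono γ (fun _ h' => ⟨h'.1.trans h, h'.2⟩)
theorem UU_mul (l : ℕ) (γ : Gn n → A) {w w' : ℤ} {x y : A} (hx : x ∈ UU l γ w)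
    (hy : y ∈ UU l γ w') : x * y ∈ UU l γ (w + w') :=
  wsp_mul γ (fun ds es h1 h2 => by rw [wl_append]; exact add_le_add h1 h2) hx hy
theorem VV_mul (l : ℕ) (γ : Gn n → A) {w w' : ℤ} {α β : Bool} {x y : A} (hx : x ∈ VV l γ w α)
    (hy : y ∈ VV l γ w' β) : x * y ∈ VV l γ (w + w') (xor α β) :=
  wsp_mul γ (fun ds es h1 h2 => by
    rw [wl_append, pw_append, h1.2, h2.2]; exact ⟨add_le_add h1.1 h2.1, rfl⟩) hx hy
theorem VV_gen (l : ℕ) (γ : Gn n → A) (d : Gn n) : γ d ∈ VV l γ (wtg l d) d.1 := by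
  rw [wp_single γ d]; exact wsp_mem γ (by simp [wl, pw])
theorem UU_gen (l : ℕ) (γ : Gn n → A) (d : Gn n) : γ d ∈ UU l γ (wtg l d) :=
  VV_le_UU l γ le_rfl _ (VV_gen l γ d)
theorem VV_one (l : ℕ) (γ : Gn n → A) : (1 : A) ∈ VV l γ 0 false := by
  rw [← wp_nil γ]; exact wsp_mem γ (by simp [wl, pw])

theorem kd_ne {i j : Fin n} (h : i ≠ j) : kd i j = 0 := by simp [kd, h]
theorem kd_self (i : Fin n) : kd i i = 1 := by simp [kd]

theorem wtg_bracket (l : ℕ) (α β δ : Bool) (i j m : Fin n) :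
    wtg l (δ, i, m) ≤ wtg l (α, i, j) + wtg l (β, j, m) - 1 := by
  simp only [wtg]
  split_ifs <;> omega

/-- Supercommutator of a generator with a word. -/
theorem comm_word (l : ℕ) (γ : Gn n → A) (hR : QR γ) (d : Gn n) (ds : List (Gn n)) :
    γ d * wp γ ds - sg d.1 (pw ds) • (wp γ ds * γ d) ∈
      wsp γ (fun es => wl l es ≤ wtg l d + wl l ds - 1 ∧ es.length ≤ ds.length ∧
        pw es = xor d.1 (pw ds)) := by
  induction ds with
  | nil => simp [wp_nil, pw, sg]
  | cons e ds ih =>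
    obtain ⟨α, i, j⟩ := d
    obtain ⟨β, k, m⟩ := e
    have key : γ (α, i, j) * wp γ ((β, k, m) :: ds) -
        sg α (pw ((β, k, m) :: ds)) • (wp γ ((β, k, m) :: ds) * γ (α, i, j)) =
        sg α β • (γ (β, k, m) * (γ (α, i, j) * wp γ ds - sg α (pw ds) • (wp γ ds * γ (α, i, j))))
        + kd j k • (γ (xor α β, i, m) * wp γ ds)
        - (sg α β * kd m i) • (γ (xor α β, k, j) * wp γ ds) := by
      rw [wp_cons, ← mul_assoc, hR α i j β k m]
      simp only [pw, sg_xor, sub_mul, add_mul, mul_sub, smul_mul_assoc, mul_smul_comm, smul_sub,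
        smul_smul, mul_assoc]
      abel
    rw [key]
    refine Submodule.sub_mem _ (Submodule.add_mem _ (Submodule.smul_mem _ _ ?_) ?_) ?_
    · refine wsp_mul γ (S := fun es => es = [(β, k, m)]) ?_ ?_ ih
      · rintro _ es rfl ⟨h1, h2, h3⟩
        refine ⟨?_, ?_, ?_⟩
        · simp only [wl, List.cons_append, List.nil_append]; omega
        · simp only [List.cons_append, List.nil_append, List.length_cons]; omega
        · simp only [List.cons_append, List.nil_append, pw, h3]
          cases α <;> cases β <;> cases pw ds <;> rfl
      · rw [wp_single γ]; exact wsp_mem γ rfl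
    · by_cases hjk : j = k
      · subst hjk
        apply Submodule.smul_mem
        rw [← wp_cons]
        refine wsp_mem γ ⟨?_, ?_, ?_⟩
        · have := wtg_bracket l α β (xor α β) i j m
          simp only [wl]; omega
        · simp
        · simp [pw]
      · rw [kd_ne hjk]; simp
    · by_cases hjk : m = i
      · subst hjk
        apply Submodule.smul_mem
        rw [← wp_cons]
        refine wsp_mem γ ⟨?_, ?_, ?_⟩
        · have := wtg_bracket l β α (xor α β) k m j
          simp only [wl]; omega
        · simp
        · simp [pw]
      · rw [kd_ne hjk]; simp

theorem comm_VV (l : ℕ) (γ : Gn n → A) (hR : QR γ) {w w' : ℤ} {α β : Bool} {x y : A}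
    (hx : x ∈ VV l γ w α) (hy : y ∈ VV l γ w' β) :
    x * y - sg α β • (y * x) ∈ VV l γ (w + w' - 1) (xor α β) := by
  unfold VV wsp at hx
  induction hx using Submodule.span_induction with
  | zero => simp
  | add a b _ _ ha hb =>
    have : (a + b) * y - sg α β • (y * (a + b)) =
      (a * y - sg α β • (y * a)) + (b * y - sg α β • (y * b)) := by
      simp only [add_mul, mul_add, smul_add]; abel
    rw [this]; exact Submodule.add_mem _ ha hb
  | smul c a _ ha =>
    have : (c • a) * y - sg α β • (y * (c • a)) = c • (a * y - sg α β • (y * a)) := by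
      simp only [smul_mul_assoc, mul_smul_comm, smul_sub]; rw [smul_comm]
    rw [this]; exact Submodule.smul_mem _ _ ha
  | mem x hx =>
    obtain ⟨ds, ⟨h1, h2⟩, rfl⟩ := hx
    unfold VV wsp at hy
    induction hy using Submodule.span_induction with
    | zero => simp
    | add a b _ _ ha hb =>
      have : wp γ ds * (a + b) - sg α β • ((a + b) * wp γ ds) =
        (wp γ ds * a - sg α β • (a * wp γ ds)) + (wp γ ds * b - sg α β • (b * wp γ ds)) := by
        simp only [add_mul, mul_add, smul_add]; abel
      rw [this]; exact Submodule.add_mem _ ha hb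
    | smul c a _ ha =>
      have : wp γ ds * (c • a) - sg α β • ((c • a) * wp γ ds) =
          c • (wp γ ds * a - sg α β • (a * wp γ ds)) := by
        simp only [smul_mul_assoc, mul_smul_comm, smul_sub]; rw [smul_comm]
      rw [this]; exact Submodule.smul_mem _ _ ha
    | mem y hy =>
      obtain ⟨es, ⟨h3, h4⟩, rfl⟩ := hy
      subst h2 h4
      refine VV_mono l γ (w := wl l ds + wl l es - 1) (by omega) _ ?_
      clear h1 h3
      induction ds with
      | nil => simp [wp_nil, pw, sg]
      | cons d ds ih =>
        have key : wp γ (d :: ds) * wp γ es - sg (pw (d :: ds)) (pw es) •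
            (wp γ es * wp γ (d :: ds)) =
            γ d * (wp γ ds * wp γ es - sg (pw ds) (pw es) • (wp γ es * wp γ ds)) +
            sg (pw ds) (pw es) •
              ((γ d * wp γ es - sg d.1 (pw es) • (wp γ es * γ d)) * wp γ ds) := by
          simp only [wp_cons, pw, sg_xor', sub_mul, mul_sub, smul_mul_assoc, mul_smul_comm,
            smul_sub, smul_smul, mul_assoc]
          rw [mul_comm (sg d.1 _)]
          abel
        rw [key]
        refine Submodule.add_mem _ ?_ (Submodule.smul_mem _ _ ?_)
        · have := VV_mul l γ (VV_gen l γ d) ih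
          have e1 : wtg l d + (wl l ds + wl l es - 1) = wl l (d :: ds) + wl l es - 1 := by
            simp only [wl]; ring
          rw [e1] at this
          simpa [pw] using this
        · have h5 : γ d * wp γ es - sg d.1 (pw es) • (wp γ es * γ d) ∈
              VV l γ (wtg l d + wl l es - 1) (xor d.1 (pw es)) :=
            wsp_mono γ (fun _ h => ⟨h.1, h.2.2⟩) (comm_word l γ hR d es)
          have h6 : wp γ ds ∈ VV l γ (wl l ds) (pw ds) := wsp_mem γ ⟨le_rfl, rfl⟩
          have := VV_mul l γ h5 h6
          have e1 : wtg l d + wl l es - 1 + wl l ds = wl l (d :: ds) + wl l es - 1 := by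
            simp only [wl]; ring
          have e2 : xor (xor d.1 (pw es)) (pw ds) = xor (pw (d :: ds)) (pw es) := by
            simp only [pw]; cases d.1 <;> cases pw es <;> cases pw ds <;> rfl
          rw [e1, e2] at this
          exact this

/-! ## Modulo the left ideal -/

/-- Filtration modulo the left ideal `I`. -/
def BB (l : ℕ) (γ : Gn n → A) (I : Submodule A A) (w : ℤ) : Submodule ℂ A :=
  UU l γ w ⊔ I.restrictScalars ℂ

/-- `I` contains `a - χ(a)`. -/
def ChI (l : ℕ) (γ : Gn n → A) (I : Submodule A A) : Prop :=
  ∀ d : Gn n, ps l d.2.2 < ps l d.2.1 → γ d - chg l d • 1 ∈ I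

theorem UU_le_BB (l : ℕ) (γ : Gn n → A) (I : Submodule A A) (w : ℤ) :
    UU l γ w ≤ BB l γ I w := le_sup_left
theorem I_le_BB (l : ℕ) (γ : Gn n → A) (I : Submodule A A) (w : ℤ) {x : A} (h : x ∈ I) :
    x ∈ BB l γ I w := Submodule.mem_sup_right (by simpa using h)
theorem BB_mono (l : ℕ) (γ : Gn n → A) (I : Submodule A A) {w w' : ℤ} (h : w ≤ w') :
    BB l γ I w ≤ BB l γ I w' := sup_le_sup_right (UU_mono l γ h) _

theorem I_mul {I : Submodule A A} (x : A) {y : A} (h : y ∈ I) : x * y ∈ I := by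
  simpa using I.smul_mem x h
theorem I_smulC {I : Submodule A A} (c : ℂ) {y : A} (h : y ∈ I) : c • y ∈ I :=
  (I.restrictScalars ℂ).smul_mem c h

theorem BB_mul (l : ℕ) (γ : Gn n → A) (I : Submodule A A) {w w' : ℤ} {x y : A}
    (hx : x ∈ UU l γ w) (hy : y ∈ BB l γ I w') : x * y ∈ BB l γ I (w + w') := by
  obtain ⟨u, hu, v, hv, rfl⟩ := Submodule.mem_sup.1 hy
  rw [mul_add]
  exact Submodule.add_mem _ (UU_le_BB _ _ _ _ (UU_mul l γ hx hu))
    (I_le_BB _ _ _ _ (I_mul x (by simpa using hv)))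

/-- Induction for `BB`. -/
theorem BB_ind (l : ℕ) (γ : Gn n → A) (I : Submodule A A) (w : ℤ) (N : Submodule ℂ A)
    (f : A →ₗ[ℂ] A)
    (h1 : ∀ ds, wl l ds ≤ w → f (wp γ ds) ∈ N) (h2 : ∀ x ∈ I, f x ∈ N) {x : A}
    (hx : x ∈ BB l γ I w) : f x ∈ N := by
  have : BB l γ I w ≤ N.comap f := by
    refine sup_le (Submodule.span_le.2 ?_) (fun x hx => h2 x (by simpa using hx))
    rintro _ ⟨ds, h, rfl⟩
    exact h1 ds h
  exact this hx

theorem chg_sg (l : ℕ) (d : Gn n) (α : Bool) : sg d.1 α * chg l d = chg l d := by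
  unfold chg
  split_ifs with h
  · simp [h.2.1, sg]
  · simp

theorem chg_zero (l : ℕ) (d : Gn n) (h : wtg l d ≠ 0) : chg l d = 0 := by
  unfold chg
  rw [if_neg]
  rintro ⟨h1, h2, h3⟩
  apply h
  unfold wtg
  rw [if_neg (by omega)]
  have : ps l d.2.1 = ps l d.2.2 + 1 := by
    unfold ps at *
    rw [h3, Nat.add_mod] at h1 ⊢
    rcases Nat.lt_or_ge 1 l with hl | hl
    · rw [Nat.mod_eq_of_lt hl] at *
      have := Nat.mod_lt d.2.2.val (show 0 < l by omega)
      rcases Nat.lt_or_ge (d.2.2.val % l + 1) l with h4 | h4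
      · rw [Nat.mod_eq_of_lt h4]
      · have : d.2.2.val % l + 1 = l := by omega
        rw [this, Nat.mod_self] at h1; omega
    · interval_cases l
      · simp
      · simp [Nat.mod_one] at h1
  omega

theorem m_word (l : ℕ) (γ : Gn n → A) (I : Submodule A A) (hR : QR γ) (hI : ChI l γ I)
    (d : Gn n) (hd : ps l d.2.2 < ps l d.2.1) (ds : List (Gn n)) :
    ∃ r ∈ wsp γ (fun es => wl l es ≤ wtg l d + wl l ds - 1 ∧ es.length ≤ ds.length ∧
        pw es = xor d.1 (pw ds)), (γ d - chg l d • 1) * wp γ ds - r ∈ I := by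
  refine ⟨_, comm_word l γ hR d ds, ?_⟩
  have : (γ d - chg l d • 1) * wp γ ds - (γ d * wp γ ds - sg d.1 (pw ds) • (wp γ ds * γ d)) =
      sg d.1 (pw ds) • (wp γ ds * (γ d - chg l d • 1)) := by
    simp only [sub_mul, mul_sub, smul_sub, smul_mul_assoc, mul_smul_comm, smul_smul, one_mul,
      mul_one, chg_sg]
    abel
  rw [this]
  exact I_smulC _ (I_mul _ (hI d hd))

theorem m_BB (l : ℕ) (γ : Gn n → A) (I : Submodule A A) (hR : QR γ) (hI : ChI l γ I)
    (d : Gn n) (hd : ps l d.2.2 < ps l d.2.1) {w : ℤ} {x : A} (hx : x ∈ BB l γ I w) :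
    (γ d - chg l d • 1) * x ∈ BB l γ I (w + wtg l d - 1) := by
  refine BB_ind l γ I w _ (LinearMap.mulLeft ℂ (γ d - chg l d • 1)) ?_ ?_ hx
  · intro ds h
    simp only [LinearMap.mulLeft_apply]
    obtain ⟨r, hr, h2⟩ := m_word l γ I hR hI d hd ds
    have h3 : r ∈ UU l γ (w + wtg l d - 1) := wsp_mono γ (fun es h => by omega) hr
    have := Submodule.add_mem _ (I_le_BB l γ I (w + wtg l d - 1) h2) (UU_le_BB l γ I _ h3)
    simpa using this
  · intro x hx
    simp only [LinearMap.mulLeft_apply]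
    exact I_le_BB _ _ _ _ (I_mul _ hx)

theorem wtg_pos (l : ℕ) (d : Gn n) (hd : ps l d.2.1 ≤ ps l d.2.2) : 0 < wtg l d := by
  unfold wtg; rw [if_pos hd]; omega

/-- Words of negative weight lie in `I`. -/
theorem neg_word (l : ℕ) (γ : Gn n → A) (I : Submodule A A) (hR : QR γ) (hI : ChI l γ I)
    (L : ℕ) : ∀ ds : List (Gn n), ds.length ≤ L → wl l ds < 0 → wp γ ds ∈ I := by
  induction L with
  | zero =>
    intro ds h1 h2
    obtain rfl : ds = [] := List.length_eq_zero_iff.1 (by omega)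
    simp [wl] at h2
  | succ L ih =>
    intro ds h1 h2
    cases ds with
    | nil => simp [wl] at h2
    | cons d ds =>
      simp only [List.length_cons] at h1
      simp only [wl] at h2
      rw [wp_cons]
      by_cases hd : ps l d.2.1 ≤ ps l d.2.2
      · have := wtg_pos l d hd
        exact I_mul _ (ih ds (by omega) (by omega))
      · push Not at hd
        obtain ⟨r, hr, h3⟩ := m_word l γ I hR hI d hd ds
        have hr' : r ∈ I := by
          have : wsp γ (fun es => wl l es ≤ wtg l d + wl l ds - 1 ∧ es.length ≤ ds.length ∧
            pw es = xor d.1 (pw ds)) ≤ I.restrictScalars ℂ := by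
            apply Submodule.span_le.2
            rintro _ ⟨es, h4, rfl⟩
            exact ih es (by omega) (by omega)
          exact this hr
        have h4 : chg l d • wp γ ds ∈ I := by
          by_cases h0 : wtg l d = 0
          · exact I_smulC _ (ih ds (by omega) (by omega))
          · rw [chg_zero l d h0]; simp
        have := I.add_mem (I.add_mem h3 hr') h4
        have e : (γ d - chg l d • 1) * wp γ ds - r + r + chg l d • wp γ ds = γ d * wp γ ds := by
          simp [sub_mul]
        rwa [e] at this

theorem BB_neg (l : ℕ) (γ : Gn n → A) (I : Submodule A A) (hR : QR γ) (hI : ChI l γ I)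
    {w : ℤ} (hw : w < 0) {x : A} (hx : x ∈ BB l γ I w) : x ∈ I := by
  have := BB_ind l γ I w (I.restrictScalars ℂ) LinearMap.id
    (fun ds h => neg_word l γ I hR hI _ ds le_rfl (by omega)) (fun x hx => by simpa using hx) hx
  simpa using this

/-! ## Sergeev's elements -/

/-- `e^{(M)}` (`a = false`) and `f^{(M)}` (`a = true`). -/
def gM (γ : Gn n → A) : ℕ → Bool → Fin n → Fin n → A
  | 0, a, i, j => if a then 0 else kd i j • 1
  | M + 1, a, i, j => (∑ k, γ (false, i, k) * gM γ M a k j) +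
      (-1 : ℂ) ^ M • ∑ k, γ (true, i, k) * gM γ M (!a) k j

theorem gM_comm_even (γ : Gn n → A) (hR : QR γ) (M : ℕ) : ∀ (a : Bool) (i j k m : Fin n),
    i ≠ m → γ (false, i, j) * gM γ M a k m - gM γ M a k m * γ (false, i, j) =
      kd j k • gM γ M a i m := by
  induction M with
  | zero =>
    intro a i j k m him
    cases a <;> simp [gM, kd_ne him]
  | succ M ih =>
    intro a i j k m him
    have hs : ∀ β b, (∑ t, γ (β, k, t) * gM γ M b t m) * γ (false, i, j) =
        γ (false, i, j) * (∑ t, γ (β, k, t) * gM γ M b t m) -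
          kd j k • ∑ t, γ (β, i, t) * gM γ M b t m := by
      intro β b
      have h1 : ∀ t, γ (β, k, t) * gM γ M b t m * γ (false, i, j) =
          γ (false, i, j) * (γ (β, k, t) * gM γ M b t m) -
            kd j k • (γ (β, i, t) * gM γ M b t m) + kd t i • (γ (β, k, j) * gM γ M b t m)
            - kd j t • (γ (β, k, j) * gM γ M b i m) := by
        intro t
        have h2 := ih b i j t m him
        have h3 := hR false i j β k t
        have h4 : gM γ M b t m * γ (false, i, j) = γ (false, i, j) * gM γ M b t m -
          kd j t • gM γ M b i m := by rw [← h2]; abel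
        rw [mul_assoc, h4, mul_sub, ← mul_assoc, ← mul_assoc, h3]
        by_cases hjt : j = t
        · subst hjt
          simp [sg, add_mul, sub_mul]
          abel
        · simp [sg, add_mul, sub_mul, kd_ne hjt]
          abel
      rw [Finset.sum_mul, Finset.sum_congr rfl (fun t _ => h1 t)]
      simp only [Finset.sum_sub_distrib, Finset.sum_add_distrib, Finset.mul_sum, Finset.smul_sum]
      have h5 : ∑ t, kd t i • (γ (β, k, j) * gM γ M b t m) = γ (β, k, j) * gM γ M b i m := by
        rw [Finset.sum_eq_single i]
        · simp [kd_self]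
        · intro t _ ht; simp [kd_ne ht]
        · simp
      have h6 : ∑ t, kd j t • (γ (β, k, j) * gM γ M b i m) = γ (β, k, j) * gM γ M b i m := by
        rw [Finset.sum_eq_single j]
        · simp [kd_self]
        · intro t _ ht; simp [kd_ne (Ne.symm ht)]
        · simp
      rw [h5, h6]; abel
    simp only [gM, add_mul, mul_add, smul_mul_assoc, mul_smul_comm, hs, smul_add, smul_sub]
    rw [smul_comm (kd j k)]
    abel

theorem gM_comm_odd (γ : Gn n → A) (hR : QR γ) (M : ℕ) : ∀ (a : Bool) (i j k m : Fin n),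
    i ≠ m → γ (true, i, j) * gM γ M a k m - sg true a • (gM γ M a k m * γ (true, i, j)) =
      ((-1 : ℂ) ^ (M + 1) * kd j k) • gM γ M (!a) i m := by
  induction M with
  | zero =>
    intro a i j k m him
    cases a <;> simp [gM, kd_ne him, sg]
  | succ M ih =>
    intro a i j k m him
    have hs : ∀ β b, sg true (xor β b) • ((∑ t, γ (β, k, t) * gM γ M b t m) * γ (true, i, j)) =
        γ (true, i, j) * (∑ t, γ (β, k, t) * gM γ M b t m) -
          kd j k • ∑ t, γ (!β, i, t) * gM γ M b t m + sg true β • (γ (!β, k, j) * gM γ M b i m)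
          - (sg true β * (-1) ^ (M + 1)) • (γ (β, k, j) * gM γ M (!b) i m) := by
      intro β b
      have h1 : ∀ t, sg true (xor β b) • (γ (β, k, t) * gM γ M b t m * γ (true, i, j)) =
          γ (true, i, j) * (γ (β, k, t) * gM γ M b t m) -
            kd j k • (γ (!β, i, t) * gM γ M b t m) +
            kd t i • (sg true β • (γ (!β, k, j) * gM γ M b t m))
            - kd j t • ((sg true β * (-1) ^ (M + 1)) • (γ (β, k, j) * gM γ M (!b) i m)) := by
        intro t
        have h2 := ih b i j t m him
        have h3 := hR true i j β k t
        have h4 : sg true b • (gM γ M b t m * γ (true, i, j)) = γ (true, i, j) * gM γ M b t m -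
          ((-1 : ℂ) ^ (M + 1) * kd j t) • gM γ M (!b) i m := by rw [← h2]; abel
        have h7 : sg true (xor β b) • (γ (β, k, t) * gM γ M b t m * γ (true, i, j)) =
          sg true β • (γ (β, k, t) * (sg true b • (gM γ M b t m * γ (true, i, j)))) := by
          rw [sg_xor, mul_smul_comm, smul_smul, mul_assoc]
        rw [h7, h4, mul_sub, ← mul_assoc, ← mul_assoc, h3]
        simp only [Bool.true_xor, add_mul, sub_mul, smul_mul_assoc, mul_smul_comm, smul_sub,
          smul_smul]
        by_cases hjt : j = t
        · subst hjt
          rw [kd_self, mul_comm (kd j i)]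
          simp only [mul_one, one_mul]
          abel
        · simp only [kd_ne hjt, mul_comm (kd t i), mul_zero, zero_mul, zero_smul, sub_zero]
          abel
      rw [Finset.sum_mul, Finset.smul_sum, Finset.sum_congr rfl (fun t _ => h1 t)]
      simp only [Finset.sum_sub_distrib, Finset.sum_add_distrib]
      have h5 : ∑ t, kd t i • (sg true β • (γ (!β, k, j) * gM γ M b t m)) =
          sg true β • (γ (!β, k, j) * gM γ M b i m) := by
        rw [Finset.sum_eq_single i]
        · simp [kd_self]
        · intro t _ ht; simp [kd_ne ht]
        · simp
      have h6 : ∑ t, kd j t • ((sg true β * (-1) ^ (M + 1)) • (γ (β, k, j) * gM γ M (!b) i m)) =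
          (sg true β * (-1) ^ (M + 1)) • (γ (β, k, j) * gM γ M (!b) i m) := by
        rw [Finset.sum_eq_single j]
        · simp [kd_self]
        · intro t _ ht; simp [kd_ne (Ne.symm ht)]
        · simp
      rw [h5, h6]; simp only [Finset.mul_sum, Finset.smul_sum]
    have hA := hs false a
    have hB := hs true (!a)
    simp only [Bool.false_xor, Bool.true_xor, Bool.not_not] at hA hB
    simp only [gM, add_mul, mul_add, smul_mul_assoc, mul_smul_comm, smul_add]
    rw [smul_comm (sg true a), hA, hB]
    simp only [sg, Bool.not_not, Bool.not_false, Bool.not_true, Bool.and_true, Bool.and_false]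
    simp only [smul_add, smul_sub, smul_smul, pow_succ]
    have hp : (-1 : ℂ) ^ M * (-1) ^ M = 1 := by rw [← mul_pow]; simp
    rcases neg_one_pow_eq_or ℂ M with h | h <;> rw [h] <;> simp <;> abel

/-- The index `i + t`. -/
def sh (i : Fin n) (t : ℕ) : Fin n := ⟨(i.val + t) % n, Nat.mod_lt _ (by have := i.isLt; omega)⟩

theorem sh_val {l : ℕ} (h : l ∣ n) (i : Fin n) (t : ℕ) (ht : ps l i + t < l) :
    (sh i t).val = i.val + t := by
  unfold sh ps at *
  simp only
  apply Nat.mod_eq_of_lt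
  obtain ⟨c, rfl⟩ := h
  have h1 := Nat.div_add_mod i.val l
  have h2 : i.val / l < c := Nat.div_lt_of_lt_mul i.isLt
  have h3 : l * (i.val / l + 1) ≤ l * c := Nat.mul_le_mul_left l h2
  rw [Nat.mul_add] at h3
  omega

theorem ps_add {l : ℕ} (i i' : Fin n) (t : ℕ) (ht : ps l i + t < l) (h : i'.val = i.val + t) :
    ps l i' = ps l i + t := by
  unfold ps at *
  have h1 := Nat.div_add_mod i.val l
  rw [h, ← h1, add_assoc, Nat.mul_add_mod, Nat.mod_eq_of_lt]
  · simp
  · simpa using ht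

theorem ps_sub {l : ℕ} (i i' : Fin n) (t : ℕ) (ht : t ≤ ps l i) (h : i.val = i'.val + t)
    (hl : 0 < l) : ps l i = ps l i' + t := by
  have h0 : ps l i < l := Nat.mod_lt _ hl
  unfold ps at *
  have h1 := Nat.div_add_mod i.val l
  have h2 : i'.val = l * (i.val / l) + (i.val % l - t) := by omega
  have h3 : i'.val % l = i.val % l - t := by
    rw [h2, Nat.mul_add_mod, Nat.mod_eq_of_lt (by omega)]
  omega

theorem ps_sh {l : ℕ} (h : l ∣ n) (i : Fin n) (t : ℕ) (ht : ps l i + t < l) :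
    ps l (sh i t) = ps l i + t := ps_add i _ t ht (sh_val h i t ht)

/-- The index `i - t`. -/
def shm (i : Fin n) (t : ℕ) : Fin n := ⟨i.val - t, by have := i.isLt; omega⟩

theorem ps_le (l : ℕ) (i : Fin n) : ps l i ≤ i.val := Nat.mod_le _ _

theorem ps_shm {l : ℕ} (hl : 0 < l) (i : Fin n) (t : ℕ) (ht : t ≤ ps l i) :
    ps l i = ps l (shm i t) + t := by
  refine ps_sub i (shm i t) t ht ?_ hl
  have := ps_le l i
  simp [shm]; omega

/-- weight bound for `gM`. -/
theorem gM_VV (l : ℕ) (γ : Gn n → A) (M : ℕ) : ∀ (a : Bool) (i j : Fin n), ps l j = 0 →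
    gM γ M a i j ∈ VV l γ (if M ≤ ps l i then 2 * ((M : ℤ) - ps l i) else 2 * ((M : ℤ) - ps l i) - 1)
      a := by
  induction M with
  | zero =>
    intro a i j hj
    cases a with
    | true => simp [gM]
    | false =>
      by_cases h : i = j
      · subst h
        simp only [gM, hj]
        simpa [kd_self] using VV_one l γ
      · simp [gM, kd_ne h]
  | succ M ih =>
    intro a i j hj
    have key : ∀ β k, γ (β, i, k) * gM γ M (xor β a) k j ∈
        VV l γ (if M + 1 ≤ ps l i then 2 * (((M + 1 : ℕ) : ℤ) - ps l i)
          else 2 * (((M + 1 : ℕ) : ℤ) - ps l i) - 1) a := by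
      intro β k
      have h1 := VV_mul l γ (VV_gen l γ (β, i, k)) (ih (xor β a) k j hj)
      have e : xor β (xor β a) = a := by cases β <;> cases a <;> rfl
      simp only [e] at h1
      refine VV_mono l γ ?_ a h1
      simp only [wtg]
      push_cast
      split_ifs <;> omega
    simp only [gM]
    refine Submodule.add_mem _ (Submodule.sum_mem _ fun k _ => ?_)
      (Submodule.smul_mem _ _ (Submodule.sum_mem _ fun k _ => ?_))
    · simpa using key false k
    · simpa using key true k

/-! ## Leading terms -/

theorem gM_BB (l : ℕ) (γ : Gn n → A) (I : Submodule A A) (M : ℕ) (a : Bool) (i j : Fin n)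
    (hj : ps l j = 0) {w : ℤ}
    (hw : (if M ≤ ps l i then 2 * ((M : ℤ) - ps l i) else 2 * ((M : ℤ) - ps l i) - 1) ≤ w) :
    gM γ M a i j ∈ BB l γ I w :=
  UU_le_BB l γ I w (VV_le_UU l γ hw a (gM_VV l γ M a i j hj))

/-- `M = ps i` claim. -/
def DeltaC (l : ℕ) (γ : Gn n → A) (I : Submodule A A) (M : ℕ) : Prop :=
  ∀ (a : Bool) (i j : Fin n), ps l j = 0 → ps l i = M →
    gM γ M a i j - (if a = false ∧ i.val = j.val + M then (1 : ℂ) else 0) • 1 ∈ I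

theorem term_lem {l : ℕ} (hl : 0 < l) (h : l ∣ n) (γ : Gn n → A) (I : Submodule A A)
    (hR : QR γ) (hI : ChI l γ I)
    (M : ℕ) (hD : DeltaC l γ I M) (β b : Bool) (i j k : Fin n) (hj : ps l j = 0) :
    γ (β, i, k) * gM γ M b k j - (chg l (β, i, k) • gM γ M b k j +
      (if ps l i ≤ M ∧ b = false ∧ M < l ∧ k = sh j M then γ (β, i, k) else 0)) ∈
      BB l γ I (2 * ((M : ℤ) - ps l i)) := by
  by_cases hk : ps l k < ps l i
  · have h0 : ¬ (ps l i ≤ M ∧ b = false ∧ M < l ∧ k = sh j M) := by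
      rintro ⟨h1, h2, h3, h4⟩
      have := ps_sh h j M (by omega)
      rw [← h4] at this
      omega
    rw [if_neg h0, add_zero]
    have h1 := m_BB l γ I hR hI (β, i, k) hk (gM_BB l γ I M b k j hj le_rfl)
    have e : γ (β, i, k) * gM γ M b k j - chg l (β, i, k) • gM γ M b k j =
      (γ (β, i, k) - chg l (β, i, k) • 1) * gM γ M b k j := by simp [sub_mul]
    rw [e]
    by_cases hM : M ≤ ps l k
    · apply I_le_BB
      refine BB_neg l γ I hR hI ?_ h1
      rw [if_pos hM]
      simp only [wtg]
      rw [if_neg (by omega)]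
      omega
    · refine BB_mono l γ I ?_ h1
      rw [if_neg hM]
      simp only [wtg]
      rw [if_neg (by omega)]
      omega
  · have hc : chg l (β, i, k) = 0 := by
      unfold chg; rw [if_neg]; rintro ⟨h1, _⟩; exact hk h1
    rw [hc, zero_smul, zero_add]
    push Not at hk
    rcases lt_trichotomy M (ps l k) with hM | hM | hM
    · have h0 : ¬ (ps l i ≤ M ∧ b = false ∧ M < l ∧ k = sh j M) := by
        rintro ⟨h1, h2, h3, h4⟩
        have := ps_sh h j M (by omega)
        rw [← h4] at this
        omega
      rw [if_neg h0, sub_zero]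
      apply I_le_BB
      apply I_mul
      refine BB_neg l γ I hR hI (w := -1) (by omega) (gM_BB l γ I M b k j hj ?_)
      rw [if_pos (by omega)]; omega
    · apply I_le_BB
      have h1 := I_mul (γ (β, i, k)) (hD b k j hj hM.symm)
      have hlt : ps l k < l := Nat.mod_lt _ hl
      have e : (ps l i ≤ M ∧ b = false ∧ M < l ∧ k = sh j M) ↔
          (b = false ∧ k.val = j.val + M) := by
        rw [Fin.ext_iff, sh_val h j M (by omega)]
        constructor
        · rintro ⟨_, h2, _, h4⟩; exact ⟨h2, h4⟩
        · rintro ⟨h2, h4⟩; exact ⟨by omega, h2, by omega, h4⟩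
      simp only [e]
      rw [mul_sub] at h1
      by_cases hh : b = false ∧ k.val = j.val + M
      · rw [if_pos hh] at h1 ⊢
        simpa using h1
      · rw [if_neg hh] at h1 ⊢
        simpa using h1
    · have h0 : ¬ (ps l i ≤ M ∧ b = false ∧ M < l ∧ k = sh j M) := by
        rintro ⟨h1, h2, h3, h4⟩
        have := ps_sh h j M (by omega)
        rw [← h4] at this
        omega
      rw [if_neg h0, sub_zero]
      refine BB_mono l γ I ?_ (BB_mul l γ I (UU_gen l γ (β, i, k)) (gM_BB l γ I M b k j hj le_rfl))
      rw [if_neg (by omega)]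
      simp only [wtg]
      rw [if_pos hk]
      omega

theorem step_lem {l : ℕ} (hl : 0 < l) (h : l ∣ n) (γ : Gn n → A) (I : Submodule A A)
    (hR : QR γ) (hI : ChI l γ I)
    (M : ℕ) (hD : DeltaC l γ I M) (a : Bool) (i j : Fin n) (hj : ps l j = 0) :
    gM γ (M + 1) a i j - ((if ps l i ≤ M ∧ M < l then
        (if a then (-1 : ℂ) ^ M else 1) • γ (a, i, sh j M) else 0) +
        (if 0 < ps l i then gM γ M a (shm i 1) j else 0)) ∈
      BB l γ I (2 * ((M : ℤ) - ps l i)) := by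
  have hsum : ∀ β b, (∑ k, γ (β, i, k) * gM γ M b k j) -
      ((if β = false ∧ 0 < ps l i then gM γ M b (shm i 1) j else 0) +
       (if ps l i ≤ M ∧ b = false ∧ M < l then γ (β, i, sh j M) else 0)) ∈
      BB l γ I (2 * ((M : ℤ) - ps l i)) := by
    intro β b
    have h1 := Submodule.sum_mem (BB l γ I (2 * ((M : ℤ) - ps l i))) (t := Finset.univ)
      (fun k _ => term_lem hl h γ I hR hI M hD β b i j k hj)
    rw [Finset.sum_sub_distrib, Finset.sum_add_distrib] at h1
    have e1 : ∑ k, chg l (β, i, k) • gM γ M b k j =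
        (if β = false ∧ 0 < ps l i then gM γ M b (shm i 1) j else 0) := by
      have hpi := ps_le l i
      split_ifs with hh
      · have hp := ps_shm hl i 1 (by omega)
        rw [Finset.sum_eq_single (shm i 1)]
        · have : chg l (β, i, shm i 1) = 1 := by
            unfold chg
            rw [if_pos]
            refine ⟨?_, hh.1, ?_⟩
            · simp only; omega
            · simp only [shm]; omega
          rw [this, one_smul]
        · intro k _ hk
          have : chg l (β, i, k) = 0 := by
            unfold chg
            rw [if_neg]
            rintro ⟨_, _, h4⟩
            apply hk
            rw [Fin.ext_iff]
            simp only [shm] at *; omega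
          rw [this, zero_smul]
        · simp
      · apply Finset.sum_eq_zero
        intro k _
        have : chg l (β, i, k) = 0 := by
          unfold chg
          rw [if_neg]
          rintro ⟨h2, h3, _⟩
          apply hh
          simp only at h2 h3
          exact ⟨h3, by omega⟩
        rw [this, zero_smul]
    have e2 : ∑ k, (if ps l i ≤ M ∧ b = false ∧ M < l ∧ k = sh j M then γ (β, i, k) else 0) =
        (if ps l i ≤ M ∧ b = false ∧ M < l then γ (β, i, sh j M) else 0) := by
      rw [Finset.sum_eq_single (sh j M)]
      · simp
      · intro k _ hk
        rw [if_neg]; tauto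
      · simp
    rw [e1, e2] at h1
    exact h1
  have hA := hsum false a
  have hB := Submodule.smul_mem _ ((-1 : ℂ) ^ M) (hsum true (!a))
  have := Submodule.add_mem _ hA hB
  convert this using 1
  simp only [gM]
  cases a
  · simp only [true_and]
    by_cases h1 : ps l i ≤ M ∧ M < l <;> by_cases h2 : 0 < ps l i <;> simp [h1, h2] <;> abel
  · simp only [true_and]
    by_cases h1 : ps l i ≤ M ∧ M < l <;> by_cases h2 : 0 < ps l i <;>
      simp [h1, h2, smul_sub] <;> abel

theorem deltaC {l : ℕ} (hl : 0 < l) (h : l ∣ n) (γ : Gn n → A) (I : Submodule A A)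
    (hR : QR γ) (hI : ChI l γ I) (M : ℕ) : DeltaC l γ I M := by
  induction M with
  | zero =>
    intro a i j hj hi
    have : gM γ 0 a i j - (if a = false ∧ i.val = j.val + 0 then (1 : ℂ) else 0) • 1 = 0 := by
      cases a <;> simp [gM, kd, Fin.ext_iff]
    rw [this]; exact I.zero_mem
  | succ M ih =>
    intro a i j hj hi
    have hs := step_lem hl h γ I hR hI M ih a i j hj
    rw [if_neg (by omega), if_pos (by omega), zero_add] at hs
    have hs' := BB_neg l γ I hR hI (by omega) hs
    have hp := ps_shm hl i 1 (by omega)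
    have hpi := ps_le l i
    have h2 := ih a (shm i 1) j hj (by omega)
    have h3 := I.add_mem hs' h2
    have e : (a = false ∧ (shm i 1).val = j.val + M) ↔ (a = false ∧ i.val = j.val + (M + 1)) := by
      simp only [shm]
      constructor
      · rintro ⟨h4, h5⟩; exact ⟨h4, by omega⟩
      · rintro ⟨h4, h5⟩; exact ⟨h4, by omega⟩
    simp only [e] at h3
    simpa using h3

/-- Leading term. -/
def lead (l : ℕ) (γ : Gn n → A) : ℕ → Bool → Fin n → Fin n → A
  | 0, _, _, _ => 0
  | M + 1, a, i, j =>
      (if M < l then (if a then (-1 : ℂ) ^ M else 1) • γ (a, i, sh j M) else 0) +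
      (if 0 < ps l i then lead l γ M a (shm i 1) j else 0)

theorem gM_lead {l : ℕ} (hl : 0 < l) (h : l ∣ n) (γ : Gn n → A) (I : Submodule A A)
    (hR : QR γ) (hI : ChI l γ I) (M : ℕ) : ∀ (a : Bool) (i j : Fin n), ps l j = 0 →
    ps l i < M → gM γ M a i j - lead l γ M a i j ∈ BB l γ I (2 * ((M : ℤ) - 1 - ps l i)) := by
  induction M with
  | zero => intro a i j _ h; omega
  | succ M ih =>
    intro a i j hj hi
    have hs := step_lem hl h γ I hR hI M (deltaC hl h γ I hR hI M) a i j hj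
    have e : (2 * (((M + 1 : ℕ) : ℤ) - 1 - ps l i)) = 2 * ((M : ℤ) - ps l i) := by push_cast; ring
    rw [e]
    simp only [lead]
    by_cases h0 : 0 < ps l i
    · have hp := ps_shm hl i 1 (by omega)
      have h2 := ih a (shm i 1) j hj (by omega)
      have e2 : 2 * ((M : ℤ) - 1 - ps l (shm i 1)) = 2 * ((M : ℤ) - ps l i) := by
        rw [hp]; push_cast; ring
      rw [e2] at h2
      have := Submodule.add_mem _ hs h2
      convert this using 1
      have e3 : (ps l i ≤ M ∧ M < l) ↔ M < l := ⟨fun h => h.2, fun h => ⟨by omega, h⟩⟩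
      simp only [e3, if_pos h0]
      abel
    · convert hs using 1
      have e3 : (ps l i ≤ M ∧ M < l) ↔ M < l := ⟨fun h => h.2, fun h => ⟨by omega, h⟩⟩
      simp only [e3, if_neg h0]

/-- `X`-letters. -/
def isX (l : ℕ) (d : Gn n) : Prop := ps l d.2.1 ≤ ps l d.2.2 ∧ ps l d.2.2 + 1 < l

/-- Span of the `X`-letters of parity `a` and offset `κ`. -/
def SX (l : ℕ) (γ : Gn n → A) (a : Bool) (κ : ℤ) : Submodule ℂ A :=
  Submodule.span ℂ {x | ∃ d : Gn n, isX l d ∧ d.1 = a ∧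
    (ps l d.2.2 : ℤ) - ps l d.2.1 = κ ∧ x = γ d}

theorem lead_lt {l : ℕ} (hl : 0 < l) (h : l ∣ n) (γ : Gn n → A) (M : ℕ) :
    ∀ (a : Bool) (i j : Fin n), ps l j = 0 → ps l i < M → M < l →
    lead l γ M a i j ∈ SX l γ a ((M : ℤ) - 1 - ps l i) := by
  induction M with
  | zero => intro a i j _ h; omega
  | succ M ih =>
    intro a i j hj hi hM
    simp only [lead]
    refine Submodule.add_mem _ ?_ ?_
    · rw [if_pos (by omega)]
      apply Submodule.smul_mem
      have := ps_sh h j M (by omega)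
      refine Submodule.subset_span ⟨(a, i, sh j M), ⟨?_, ?_⟩, rfl, ?_, rfl⟩
      · simp only; omega
      · simp only; omega
      · simp only; push_cast; omega
    · split_ifs with h0
      · have hp := ps_shm hl i 1 (by omega)
        have := ih a (shm i 1) j hj (by omega) (by omega)
        have e : ((M : ℤ) - 1 - ps l (shm i 1)) = ((M + 1 : ℕ) : ℤ) - 1 - ps l i := by
          rw [hp]; push_cast; ring
        rwa [e] at this
      · exact Submodule.zero_mem _

theorem lead_ge {l : ℕ} (hl : 0 < l) (h : l ∣ n) (γ : Gn n → A) (t : ℕ) :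
    ∀ (a : Bool) (i i0 j : Fin n), ps l j = 0 → t ≤ ps l i → i.val = i0.val + t →
    ∃ R ∈ SX l γ a ((l : ℤ) + t - 1 - ps l i), lead l γ (l + t) a i j =
      R + (if a then (-1 : ℂ) ^ (l - 1) else 1) • γ (a, i0, sh j (l - 1)) := by
  induction t with
  | zero =>
    intro a i i0 j hj hi h0
    obtain rfl : i = i0 := Fin.ext (by omega)
    obtain ⟨L, rfl⟩ : ∃ L, l = L + 1 := ⟨l - 1, by omega⟩
    simp only [add_zero, lead, Nat.add_sub_cancel, if_pos (Nat.lt_succ_self L)]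
    refine ⟨_, ?_, add_comm _ _⟩
    split_ifs with h1
    · have hp := ps_shm hl i 1 (by omega)
      have hlt : ps (L + 1) i < L + 1 := Nat.mod_lt _ hl
      have := lead_lt hl h γ L a (shm i 1) j hj (by omega) (by omega)
      convert this using 2
      rw [hp]; push_cast; ring
    · exact Submodule.zero_mem _
  | succ t ih =>
    intro a i i0 j hj hi h0
    have hp := ps_shm hl i 1 (by omega)
    have hpi := ps_le l i
    obtain ⟨R, hR, h1⟩ := ih a (shm i 1) i0 j hj (by omega) (by simp only [shm]; omega)
    refine ⟨R, ?_, ?_⟩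
    · convert hR using 2
      rw [hp]; push_cast; ring
    · rw [← add_assoc]
      simp only [lead]
      rw [if_neg (by omega), if_pos (by omega), h1, zero_add]

/-- The generator `G` attached to a last-column letter, up to lower terms. -/
theorem G_lem {l : ℕ} (hl : 0 < l) (h : l ∣ n) (γ : Gn n → A) (I : Submodule A A)
    (hR : QR γ) (hI : ChI l γ I) (a : Bool) (i0 j0 : Fin n) (hj0 : ps l j0 = l - 1) :
    ∃ (k : ℕ) (i j : Fin n) (ε : ℂ) (R : A), k < l ∧ k = l - 1 - ps l i0 ∧ ps l i = l - 1 ∧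
      ps l j = 0 ∧ R ∈ SX l γ a k ∧
      ε * ε = 1 ∧ gM γ (l + k) a i j - R - ε • γ (a, i0, j0) ∈ BB l γ I (2 * k) := by
  have hlt : ps l i0 < l := Nat.mod_lt _ hl
  have h1 := ps_sh h i0 (l - 1 - ps l i0) (by omega)
  have h2 := ps_shm hl j0 (l - 1) (by omega)
  have h3 := sh_val h i0 (l - 1 - ps l i0) (by omega)
  have h4 : sh (shm j0 (l - 1)) (l - 1) = j0 := by
    rw [Fin.ext_iff, sh_val h _ _ (by omega)]
    have := ps_le l j0
    simp only [shm]; omega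
  obtain ⟨R, hR1, hR2⟩ := lead_ge hl h γ (l - 1 - ps l i0) a (sh i0 (l - 1 - ps l i0)) i0
    (shm j0 (l - 1)) (by omega) (by omega) h3
  refine ⟨l - 1 - ps l i0, sh i0 (l - 1 - ps l i0), shm j0 (l - 1),
    (if a then (-1 : ℂ) ^ (l - 1) else 1), R, by omega, rfl, by omega, by omega, ?_, ?_, ?_⟩
  · convert hR1 using 2
    omega
  · split_ifs
    · rw [← mul_pow]; simp
    · simp
  · have h5 := gM_lead hl h γ I hR hI (l + (l - 1 - ps l i0)) a (sh i0 (l - 1 - ps l i0))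
      (shm j0 (l - 1)) (by omega) (by omega)
    rw [hR2, h4, ← sub_sub] at h5
    convert h5 using 2
    rw [h1]; push_cast; omega

theorem SX_VV (l : ℕ) (γ : Gn n → A) (a : Bool) (κ : ℤ) : SX l γ a κ ≤ VV l γ (2 * κ + 1) a := by
  apply Submodule.span_le.2
  rintro _ ⟨d, h1, h2, h3, rfl⟩
  have := VV_gen l γ d
  rw [h2] at this
  refine VV_mono l γ ?_ a this
  unfold wtg
  rw [if_pos h1.1]; omega

/-- Elements of `VV w a` lying in `BB (w-1)` lower the filtration. -/
theorem low_mul (l : ℕ) (γ : Gn n → A) (I : Submodule A A) (hR : QR γ) {w w' : ℤ} {a : Bool}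
    {D x : A} (h1 : D ∈ VV l γ w a) (h2 : D ∈ BB l γ I (w - 1)) (hx : x ∈ BB l γ I w') :
    D * x ∈ BB l γ I (w + w' - 1) := by
  refine BB_ind l γ I w' _ (LinearMap.mulLeft ℂ D) ?_ ?_ hx
  · intro ds h
    simp only [LinearMap.mulLeft_apply]
    have hds : wp γ ds ∈ VV l γ w' (pw ds) := wsp_mem γ ⟨h, rfl⟩
    have h3 := UU_le_BB l γ I _ (VV_le_UU l γ le_rfl _ (comm_VV l γ hR h1 hds))
    have h4 := BB_mul l γ I (VV_le_UU l γ le_rfl _ hds) h2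
    have e : w' + (w - 1) = w + w' - 1 := by ring
    rw [e] at h4
    have := Submodule.add_mem _ h3 (Submodule.smul_mem _ (sg a (pw ds)) h4)
    simpa using this
  · intro y hy
    exact I_le_BB _ _ _ _ (I_mul _ hy)

/-- Words in the `X`'s and `G`'s, with weight and number of `X`'s. -/
inductive TW (l : ℕ) (γ : Gn n → A) : ℤ → ℕ → A → Prop
  | one : TW l γ 0 0 1
  | X (w : ℤ) (s : ℕ) (u : A) (d : Gn n) (hd : isX l d) (hu : TW l γ w s u) :
      TW l γ (w + wtg l d) (s + 1) (γ d * u)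
  | G (w : ℤ) (s : ℕ) (u : A) (a : Bool) (i j : Fin n) (k : ℕ) (hk : k < l)
      (hi : ps l i = l - 1) (hj : ps l j = 0) (hu : TW l γ w s u) :
      TW l γ (w + (2 * k + 1)) s (gM γ (l + k) a i j * u)

/-- Span of such words. -/
def TS (l : ℕ) (γ : Gn n → A) (w : ℤ) (s : ℕ) : Submodule ℂ A :=
  Submodule.span ℂ {u | ∃ w' ≤ w, ∃ s' ≤ s, TW l γ w' s' u}

theorem TW_le {l : ℕ} {γ : Gn n → A} {w : ℤ} {s : ℕ} {u : A} (h : TW l γ w s u) :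
    (s : ℤ) ≤ w := by
  induction h with
  | one => simp
  | X w s u d hd hu ih => have := wtg_pos l d hd.1; push_cast; omega
  | G => omega

/-- Span of all words of bounded weight. -/
def TT (l : ℕ) (γ : Gn n → A) (w : ℤ) : Submodule ℂ A :=
  Submodule.span ℂ {u | ∃ w' ≤ w, ∃ s, TW l γ w' s u}

theorem TT_mono (l : ℕ) (γ : Gn n → A) {w w' : ℤ} (h : w ≤ w') : TT l γ w ≤ TT l γ w' := by
  apply Submodule.span_mono
  rintro u ⟨w1, h1, h2⟩
  exact ⟨w1, h1.trans h, h2⟩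

theorem TT_le_TS (l : ℕ) (γ : Gn n → A) (w : ℤ) : TT l γ w ≤ TS l γ w w.toNat := by
  apply Submodule.span_mono
  rintro u ⟨w1, h1, s, h2⟩
  have := TW_le h2
  exact ⟨w1, h1, s, by omega, h2⟩

theorem G_VV {l : ℕ} (hl : 0 < l) (γ : Gn n → A) (a : Bool) (i j : Fin n) (k : ℕ)
    (hi : ps l i = l - 1) (hj : ps l j = 0) : gM γ (l + k) a i j ∈ VV l γ (2 * k + 1) a := by
  refine VV_mono l γ ?_ a (gM_VV l γ (l + k) a i j hj)
  rw [if_neg (by omega), hi]; push_cast; omega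

theorem TT_I_mul (l : ℕ) (γ : Gn n → A) (I : Submodule A A) {w w' : ℤ} {x v : A}
    (hx : ∀ w1 s u, TW l γ w1 s u → ∃ s', TW l γ (w1 + w') s' (x * u))
    (hv : v ∈ TT l γ w ⊔ I.restrictScalars ℂ) :
    x * v ∈ TT l γ (w + w') ⊔ I.restrictScalars ℂ := by
  have : TT l γ w ⊔ I.restrictScalars ℂ ≤
      (TT l γ (w + w') ⊔ I.restrictScalars ℂ).comap (LinearMap.mulLeft ℂ x) := by
    refine sup_le (Submodule.span_le.2 ?_) ?_
    · rintro u ⟨w1, h1, s, h2⟩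
      obtain ⟨s', h3⟩ := hx _ _ _ h2
      exact Submodule.mem_sup_left (Submodule.subset_span ⟨_, by omega, s', h3⟩)
    · intro u hu
      exact Submodule.mem_sup_right (I_mul x (by simpa using hu))
  exact this hv

/-- Spanning. -/
theorem span_lem {l : ℕ} (hl : 0 < l) (h : l ∣ n) (γ : Gn n → A) (I : Submodule A A)
    (hR : QR γ) (hI : ChI l γ I) (N : ℕ) : ∀ w : ℤ, w < N →
    BB l γ I w ≤ TT l γ w ⊔ I.restrictScalars ℂ := by
  induction N with
  | zero =>
    intro w hw x hx
    exact Submodule.mem_sup_right (by simpa using BB_neg l γ I hR hI (by simpa using hw) hx)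
  | succ N ih =>
    intro w hw
    have key : ∀ (ds : List (Gn n)), wl l ds ≤ w → wp γ ds ∈ TT l γ w ⊔ I.restrictScalars ℂ := by
      intro ds
      have low : ∀ x ∈ BB l γ I (w - 1), x ∈ TT l γ w ⊔ I.restrictScalars ℂ := by
        intro x hx
        exact sup_le_sup_right (TT_mono l γ (by omega)) _ (ih (w - 1) (by push_cast at hw; omega) hx)
      induction ds with
      | nil =>
        intro hds
        rw [wp_nil]
        exact Submodule.mem_sup_left (Submodule.subset_span ⟨0, hds, 0, TW.one⟩)
      | cons d ds ihd =>
        intro hds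
        simp only [wl] at hds
        have hX : ∀ d' : Gn n, isX l d' → wtg l d' = wtg l d →
            γ d' * wp γ ds ∈ TT l γ w ⊔ I.restrictScalars ℂ := by
          intro d' hd' hw'
          have hp := wtg_pos l d' hd'.1
          have h1 : wp γ ds ∈ BB l γ I (w - wtg l d') :=
            UU_le_BB l γ I _ (wsp_mem γ (by omega))
          have h2 := ih (w - wtg l d') (by push_cast at hw; omega) h1
          have h3 := TT_I_mul l γ I (w' := wtg l d') (x := γ d')
            (fun w1 s u hu => ⟨_, TW.X w1 s u d' hd' hu⟩) h2
          simpa using h3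
        rw [wp_cons]
        by_cases hd : ps l d.2.1 ≤ ps l d.2.2
        · by_cases hd2 : ps l d.2.2 + 1 < l
          · exact hX d ⟨hd, hd2⟩ rfl
          · have hlt : ps l d.2.2 < l := Nat.mod_lt _ hl
            obtain ⟨a, i0, j0⟩ := d
            simp only at hd hd2 hlt
            obtain ⟨k, i, j, ε, R, hk, hk', hi, hj, hRS, hε, hG⟩ :=
              G_lem hl h γ I hR hI a i0 j0 (by omega)
            have hwt : wtg l (a, i0, j0) = 2 * k + 1 := by
              simp only [wtg]; rw [if_pos hd]; omega
            rw [hwt] at hds hX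
            have h1 : wp γ ds ∈ BB l γ I (w - (2 * k + 1)) :=
              UU_le_BB l γ I _ (wsp_mem γ (by omega))
            have hGV := G_VV hl γ a i j k hi hj
            have hDV : gM γ (l + k) a i j - R - ε • γ (a, i0, j0) ∈ VV l γ (2 * k + 1) a := by
              refine Submodule.sub_mem _ (Submodule.sub_mem _ hGV (SX_VV l γ a k hRS))
                (Submodule.smul_mem _ _ ?_)
              rw [← hwt]; exact VV_gen l γ (a, i0, j0)
            have h2 := low_mul l γ I hR hDV (by simpa using hG) h1
            have h3 := low _ (by simpa using h2)
            have h4 : R * wp γ ds ∈ TT l γ w ⊔ I.restrictScalars ℂ := by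
              have : SX l γ a k ≤ (TT l γ w ⊔ I.restrictScalars ℂ).comap
                  (LinearMap.mulRight ℂ (wp γ ds)) := by
                apply Submodule.span_le.2
                rintro _ ⟨d', g1, g2, g3, rfl⟩
                refine hX d' g1 ?_
                unfold wtg; rw [if_pos g1.1]; omega
              exact this hRS
            have h5 : gM γ (l + k) a i j * wp γ ds ∈ TT l γ w ⊔ I.restrictScalars ℂ := by
              have h2 := ih (w - (2 * k + 1)) (by push_cast at hw; omega) h1
              have h3 := TT_I_mul l γ I (w' := 2 * k + 1) (x := gM γ (l + k) a i j)
                (fun w1 s u hu => ⟨_, TW.G w1 s u a i j k hk hi hj hu⟩) h2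
              simpa using h3
            have h6 := Submodule.smul_mem _ ε (Submodule.sub_mem _ (Submodule.sub_mem _ h5 h4) h3)
            convert h6 using 1
            simp only [sub_mul, smul_sub, smul_mul_assoc, smul_smul, hε, one_smul]
            abel
        · push Not at hd
          have h1 : wp γ ds ∈ BB l γ I (w - wtg l d) := UU_le_BB l γ I _ (wsp_mem γ (by omega))
          have h2 := m_BB l γ I hR hI d hd h1
          have h3 := low _ (by simpa using h2)
          have h4 : chg l d • wp γ ds ∈ TT l γ w ⊔ I.restrictScalars ℂ := by
            by_cases h0 : wtg l d = 0
            · exact Submodule.smul_mem _ _ (ihd (by omega))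
            · rw [chg_zero l d h0, zero_smul]; exact Submodule.zero_mem _
          have := Submodule.add_mem _ h3 h4
          simpa [sub_mul] using this
    intro x hx
    exact BB_ind l γ I w _ LinearMap.id key
      (fun x hx => Submodule.mem_sup_right (by simpa using hx)) hx

/-! ## The Euler operator -/

/-- The letter dual to `x` after a shift by `t`. -/
def dl (x : Gn n) (t : ℕ) : Gn n := (x.1, sh x.2.2 (1 + t), sh x.2.1 t)

/-- The lowering operator dual to `x`. -/
def AA (l : ℕ) (γ : Gn n → A) (x : Gn n) : A :=
  ∑ t ∈ Finset.range (l - 1 - ps l x.2.2),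
    (sg x.1 x.1) ^ t • (γ (dl x t) - chg l (dl x t) • 1)

theorem dl_ps {l : ℕ} (h : l ∣ n) (x : Gn n) (hx : isX l x) (t : ℕ)
    (ht : t < l - 1 - ps l x.2.2) :
    ps l (dl x t).2.1 = ps l x.2.2 + 1 + t ∧ ps l (dl x t).2.2 = ps l x.2.1 + t := by
  obtain ⟨h1, h2⟩ := hx
  refine ⟨?_, ?_⟩
  · have := ps_sh h x.2.2 (1 + t) (by omega)
    simp only [dl]; omega
  · exact ps_sh h x.2.1 t (by omega)

theorem dl_wt {l : ℕ} (h : l ∣ n) (x : Gn n) (hx : isX l x) (t : ℕ)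
    (ht : t < l - 1 - ps l x.2.2) : wtg l (dl x t) = 1 - wtg l x := by
  obtain ⟨h1, h2⟩ := dl_ps h x hx t ht
  have h3 := hx.1
  unfold wtg
  rw [h1, h2, if_neg (by omega), if_pos h3]
  push_cast; omega

theorem AA_BB {l : ℕ} (h : l ∣ n) (γ : Gn n → A) (I : Submodule A A) (hR : QR γ)
    (hI : ChI l γ I) (x : Gn n) (hx : isX l x) {w : ℤ} {v : A} (hv : v ∈ BB l γ I w) :
    AA l γ x * v ∈ BB l γ I (w - wtg l x) := by
  unfold AA
  rw [Finset.sum_mul]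
  refine Submodule.sum_mem _ fun t ht => ?_
  rw [Finset.mem_range] at ht
  rw [smul_mul_assoc]
  refine Submodule.smul_mem _ _ ?_
  have h1 := dl_ps h x hx t ht
  have h2 := hx.1
  have := m_BB l γ I hR hI (dl x t) (by omega) hv
  rw [dl_wt h x hx t ht] at this
  exact BB_mono l γ I (by omega) this

theorem AA_I {l : ℕ} (h : l ∣ n) (γ : Gn n → A) (I : Submodule A A)
    (x : Gn n) (hx : isX l x) {v : A}
    (hv : ∀ d : Gn n, ps l d.2.2 < ps l d.2.1 → (γ d - chg l d • 1) * v ∈ I) :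
    AA l γ x * v ∈ I := by
  unfold AA
  rw [Finset.sum_mul]
  refine Submodule.sum_mem _ fun t ht => ?_
  rw [Finset.mem_range] at ht
  rw [smul_mul_assoc]
  refine I_smulC _ ?_
  have h1 := dl_ps h x hx t ht
  have h2 := hx.1
  exact hv (dl x t) (by omega)

theorem z_BB {l : ℕ} (γ : Gn n → A) (I : Submodule A A) (hR : QR γ)
    (hI : ChI l γ I) (z : Gn n) (W : ℤ) (h1 : wtg l z ≤ W)
    (h2 : ps l z.2.1 ≤ ps l z.2.2 → wtg l z ≤ W - 1) {w : ℤ} {v : A} (hv : v ∈ BB l γ I w) :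
    γ z * v - chg l z • v ∈ BB l γ I (w + W - 1) := by
  by_cases hz : ps l z.2.1 ≤ ps l z.2.2
  · have : chg l z = 0 := by
      unfold chg; rw [if_neg (by omega)]
    rw [this, zero_smul, sub_zero]
    have h3 := h2 hz
    exact BB_mono l γ I (by omega) (BB_mul l γ I (UU_gen l γ z) hv)
  · have := m_BB l γ I hR hI z (by omega) hv
    rw [sub_mul, smul_mul_assoc, one_mul] at this
    exact BB_mono l γ I (by omega) this

/-- Indicator that `y` is `x` shifted by `t`. -/
def FF (x y : Gn n) (t : ℕ) : ℂ :=
  if x.1 = y.1 ∧ sh x.2.1 t = y.2.1 ∧ sh x.2.2 t = y.2.2 then 1 else 0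

theorem FF_zero (x y : Gn n) : FF x y 0 = if x = y then 1 else 0 := by
  have h0 : ∀ i : Fin n, sh i 0 = i := fun i => Fin.ext (by simp [sh, Nat.mod_eq_of_lt i.isLt])
  unfold FF
  simp only [h0, Prod.ext_iff]

theorem FF_end {l : ℕ} (h : l ∣ n) (x y : Gn n) (hx : isX l x) (hy : isX l y) :
    FF x y (l - 1 - ps l x.2.2) = 0 := by
  unfold FF
  rw [if_neg]
  rintro ⟨-, -, h3⟩
  have h1 := hx.2
  have h2 := hy.2
  have := ps_sh h x.2.2 (l - 1 - ps l x.2.2) (by omega)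
  rw [h3] at this
  omega

theorem coef1 {l : ℕ} (h : l ∣ n) (x y : Gn n) (hx : isX l x) (t : ℕ)
    (ht : t < l - 1 - ps l x.2.2) :
    kd (dl x t).2.2 y.2.1 * chg l (xor x.1 y.1, (dl x t).2.1, y.2.2) = FF x y t := by
  have h1 := dl_ps h x hx t ht
  have h2 := hx.1
  have h3 := hx.2
  have e1 := sh_val h x.2.2 (1 + t) (by omega)
  have e2 := sh_val h x.2.2 t (by omega)
  have e3 := ps_sh h x.2.2 t (by omega)
  unfold kd chg FF
  simp only [dl] at *
  by_cases c1 : sh x.2.1 t = y.2.1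
  · by_cases c2 : sh x.2.2 t = y.2.2
    · have c2' : ps l y.2.2 < ps l (sh x.2.2 (1 + t)) := by rw [← c2]; omega
      have c3' : (sh x.2.2 (1 + t)).val = y.2.2.val + 1 := by rw [← c2]; omega
      have c4 : (xor x.1 y.1 = false) ↔ x.1 = y.1 := by
        cases x.1 <;> cases y.1 <;> simp
      simp [c1, c2, c2', c3', c4]
    · have : ¬ ((sh x.2.2 (1 + t)).val = y.2.2.val + 1) := by
        intro hh; apply c2; apply Fin.ext; omega
      simp [c2, this]
  · simp [c1]

theorem coef2 {l : ℕ} (h : l ∣ n) (x y : Gn n) (hx : isX l x) (t : ℕ)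
    (ht : t < l - 1 - ps l x.2.2) :
    kd y.2.2 (dl x t).2.1 * chg l (xor x.1 y.1, y.2.1, (dl x t).2.2) = FF x y (t + 1) := by
  have h1 := dl_ps h x hx t ht
  have h2 := hx.1
  have h3 := hx.2
  have e1 := sh_val h x.2.1 (t + 1) (by omega)
  have e2 := sh_val h x.2.1 t (by omega)
  have e3 := ps_sh h x.2.1 (t + 1) (by omega)
  unfold kd chg FF
  simp only [dl, add_comm 1 t] at *
  by_cases c1 : sh x.2.2 (t + 1) = y.2.2
  · by_cases c2 : sh x.2.1 (t + 1) = y.2.1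
    · have c2' : ps l (sh x.2.1 t) < ps l y.2.1 := by rw [← c2]; omega
      have c3' : y.2.1.val = (sh x.2.1 t).val + 1 := by rw [← c2]; omega
      have c4 : (xor x.1 y.1 = false) ↔ x.1 = y.1 := by
        cases x.1 <;> cases y.1 <;> simp
      simp [c1, c2, c2', c3', c4]
    · have : ¬ (y.2.1.val = (sh x.2.1 t).val + 1) := by
        intro hh; apply c2; apply Fin.ext; omega
      simp [c2, this]
  · have : ¬ y.2.2 = sh x.2.2 (t + 1) := fun hh => c1 hh.symm
    simp [c1, this]

theorem FF_sg (x y : Gn n) (t : ℕ) : sg x.1 y.1 * FF x y t = sg x.1 x.1 * FF x y t := by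
  unfold FF
  split_ifs with h
  · rw [← h.1]
  · simp

/-- Term of the commutation of `AA x` with `γ y`. -/
theorem AAt_comm {l : ℕ} (h : l ∣ n) (γ : Gn n → A) (I : Submodule A A) (hR : QR γ)
    (hI : ChI l γ I) (x y : Gn n) (hx : isX l x) (hy : isX l y) (t : ℕ)
    (ht : t < l - 1 - ps l x.2.2) {w : ℤ} {v : A} (hv : v ∈ BB l γ I w) :
    (γ (dl x t) - chg l (dl x t) • 1) * (γ y * v) -
      sg x.1 y.1 • (γ y * ((γ (dl x t) - chg l (dl x t) • 1) * v)) -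
      (FF x y t - sg x.1 x.1 * FF x y (t + 1)) • v ∈ BB l γ I (w + wtg l y - wtg l x - 1) := by
  have hdw := dl_wt h x hx t ht
  have hps := dl_ps h x hx t ht
  have hxx := hx.1
  have c1 := coef1 h x y hx t ht
  have c2 := coef2 h x y hx t ht
  have c3 := FF_sg x y (t + 1)
  have hc : sg x.1 y.1 * chg l (dl x t) = chg l (dl x t) := chg_sg l (dl x t) y.1
  rw [← c2] at c3
  rw [← c1, ← c2, ← c3]
  have hyy := hy.1
  have hR' := hR x.1 (dl x t).2.1 (dl x t).2.2 y.1 y.2.1 y.2.2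
  have edl : (x.1, (dl x t).2.1, (dl x t).2.2) = dl x t := rfl
  have ey : (y.1, y.2.1, y.2.2) = y := rfl
  rw [edl, ey] at hR'
  set d := dl x t with hd
  have Z1 : kd d.2.2 y.2.1 • (γ (xor x.1 y.1, d.2.1, y.2.2) * v -
      chg l (xor x.1 y.1, d.2.1, y.2.2) • v) ∈ BB l γ I (w + wtg l y - wtg l x - 1) := by
    by_cases e : d.2.2 = y.2.1
    · refine Submodule.smul_mem _ _ ?_
      have b := wtg_bracket l d.1 y.1 (xor x.1 y.1) d.2.1 d.2.2 y.2.2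
      have ew : wtg l (y.1, d.2.2, y.2.2) = wtg l y := by rw [e]
      have ed : wtg l (d.1, d.2.1, d.2.2) = wtg l d := rfl
      rw [ew, ed, hdw] at b
      refine BB_mono l γ I ?_ (z_BB γ I hR hI (xor x.1 y.1, d.2.1, y.2.2)
        (wtg l y - wtg l x) (by omega) ?_ hv)
      · omega
      · intro hp
        simp only at hp
        have e' : ps l d.2.2 = ps l y.2.1 := by rw [e]
        unfold wtg
        simp only
        rw [if_pos hp, if_pos hyy, if_pos hxx]
        omega
    · rw [kd_ne e, zero_smul]; exact Submodule.zero_mem _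
  have Z2 : (sg x.1 y.1 * kd y.2.2 d.2.1) • (γ (xor x.1 y.1, y.2.1, d.2.2) * v -
      chg l (xor x.1 y.1, y.2.1, d.2.2) • v) ∈ BB l γ I (w + wtg l y - wtg l x - 1) := by
    by_cases e : y.2.2 = d.2.1
    · refine Submodule.smul_mem _ _ ?_
      have b := wtg_bracket l y.1 d.1 (xor x.1 y.1) y.2.1 y.2.2 d.2.2
      have ew : wtg l (d.1, y.2.2, d.2.2) = wtg l d := by rw [e]
      have ed : wtg l (y.1, y.2.1, y.2.2) = wtg l y := rfl
      rw [ew, ed, hdw] at b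
      refine BB_mono l γ I ?_ (z_BB γ I hR hI (xor x.1 y.1, y.2.1, d.2.2)
        (wtg l y - wtg l x) (by omega) ?_ hv)
      · omega
      · intro hp
        simp only at hp
        have e' : ps l y.2.2 = ps l d.2.1 := by rw [e]
        unfold wtg
        simp only
        rw [if_pos hp, if_pos hyy, if_pos hxx]
        omega
    · rw [kd_ne e, mul_zero, zero_smul]; exact Submodule.zero_mem _
  have := Submodule.sub_mem _ Z1 Z2
  convert this using 1
  have e1 : γ d * (γ y * v) = sg x.1 y.1 • (γ y * (γ d * v)) +
      kd d.2.2 y.2.1 • (γ (xor x.1 y.1, d.2.1, y.2.2) * v) -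
      (sg x.1 y.1 * kd y.2.2 d.2.1) • (γ (xor x.1 y.1, y.2.1, d.2.2) * v) := by
    rw [← mul_assoc, hR']
    simp only [sub_mul, add_mul, smul_mul_assoc, mul_assoc]
  have e2 : sg x.1 y.1 • (γ y * (chg l d • v)) = chg l d • (γ y * v) := by
    rw [mul_smul_comm, smul_smul, hc]
  simp only [sub_mul, smul_mul_assoc, one_mul, mul_sub, smul_sub, e2, e1, sub_smul, smul_smul]
  simp only [mul_assoc]
  abel

theorem AA_comm {l : ℕ} (h : l ∣ n) (γ : Gn n → A) (I : Submodule A A) (hR : QR γ)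
    (hI : ChI l γ I) (x y : Gn n) (hx : isX l x) (hy : isX l y) {w : ℤ} {v : A}
    (hv : v ∈ BB l γ I w) :
    AA l γ x * (γ y * v) - sg x.1 y.1 • (γ y * (AA l γ x * v)) -
      (if x = y then (1 : ℂ) else 0) • v ∈ BB l γ I (w + wtg l y - wtg l x - 1) := by
  have tel : ∑ t ∈ Finset.range (l - 1 - ps l x.2.2),
      (sg x.1 x.1) ^ t * (FF x y t - sg x.1 x.1 * FF x y (t + 1)) =
      if x = y then (1 : ℂ) else 0 := by
    have := Finset.sum_range_sub' (fun t => (sg x.1 x.1) ^ t * FF x y t) (l - 1 - ps l x.2.2)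
    rw [FF_end h x y hx hy, FF_zero] at this
    simp only [pow_zero, one_mul, mul_zero, sub_zero] at this
    rw [← this]
    refine Finset.sum_congr rfl fun t _ => ?_
    ring
  have key : AA l γ x * (γ y * v) - sg x.1 y.1 • (γ y * (AA l γ x * v)) -
      (if x = y then (1 : ℂ) else 0) • v = ∑ t ∈ Finset.range (l - 1 - ps l x.2.2),
      (sg x.1 x.1) ^ t • ((γ (dl x t) - chg l (dl x t) • 1) * (γ y * v) -
      sg x.1 y.1 • (γ y * ((γ (dl x t) - chg l (dl x t) • 1) * v)) -
      (FF x y t - sg x.1 x.1 * FF x y (t + 1)) • v) := by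
    rw [← tel, AA]
    simp only [smul_sub, Finset.sum_sub_distrib, Finset.sum_smul]
    congr 1
    · congr 1
      · simp only [smul_mul_assoc, sub_mul, smul_sub, Finset.sum_sub_distrib, one_mul,
          Finset.sum_mul]
      · simp only [smul_mul_assoc, sub_mul, smul_sub, Finset.sum_sub_distrib, one_mul,
          mul_smul_comm, mul_sub, smul_comm (sg x.1 y.1), Finset.sum_mul, Finset.mul_sum,
          Finset.smul_sum]
    · simp only [smul_smul, ← sub_smul, ← Finset.sum_sub_distrib, mul_sub]
  rw [key]
  refine Submodule.sum_mem _ fun t ht => Submodule.smul_mem _ _ ?_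
  exact AAt_comm h γ I hR hI x y hx hy t (Finset.mem_range.1 ht) hv

theorem m_G {l : ℕ} (γ : Gn n → A) (hR : QR γ) (M : ℕ) (a : Bool) (i j : Fin n)
    (hi : ps l i = l - 1) (hj : ps l j = 0) (hl : 0 < l) (d : Gn n)
    (hd : ps l d.2.2 < ps l d.2.1) :
    γ d * gM γ M a i j = sg d.1 a • (gM γ M a i j * γ d) := by
  obtain ⟨b, r, c⟩ := d
  simp only at hd ⊢
  have h1 : r ≠ j := by rintro rfl; omega
  have h2 : c ≠ i := by
    rintro rfl
    have : ps l r < l := Nat.mod_lt _ hl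
    omega
  cases b with
  | false =>
    have := gM_comm_even γ hR M a r c i j h1
    rw [kd_ne h2, zero_smul] at this
    simpa [sg] using sub_eq_zero.1 this
  | true =>
    have := gM_comm_odd γ hR M a r c i j h1
    rw [kd_ne h2, mul_zero, zero_smul] at this
    exact sub_eq_zero.1 this

theorem m_G' {l : ℕ} (γ : Gn n → A) (hR : QR γ) (M : ℕ) (a : Bool) (i j : Fin n)
    (hi : ps l i = l - 1) (hj : ps l j = 0) (hl : 0 < l) (d : Gn n)
    (hd : ps l d.2.2 < ps l d.2.1) :
    (γ d - chg l d • 1) * gM γ M a i j = sg d.1 a • (gM γ M a i j * (γ d - chg l d • 1)) := by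
  rw [sub_mul, m_G γ hR M a i j hi hj hl d hd]
  simp only [mul_sub, smul_sub, smul_mul_assoc, mul_smul_comm, smul_smul, one_mul, mul_one, chg_sg]

theorem AA_G {l : ℕ} (h : l ∣ n) (γ : Gn n → A) (hR : QR γ) (M : ℕ) (a : Bool) (i j : Fin n)
    (hi : ps l i = l - 1) (hj : ps l j = 0) (hl : 0 < l) (x : Gn n) (hx : isX l x) :
    AA l γ x * gM γ M a i j = sg x.1 a • (gM γ M a i j * AA l γ x) := by
  unfold AA
  rw [Finset.sum_mul, Finset.mul_sum, Finset.smul_sum]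
  refine Finset.sum_congr rfl fun t ht => ?_
  have h1 := dl_ps h x hx t (Finset.mem_range.1 ht)
  have h2 := hx.1
  rw [smul_mul_assoc, mul_smul_comm, m_G' γ hR M a i j hi hj hl (dl x t) (by omega), smul_comm]
  rfl

/-- The Euler operator. -/
def EE (l : ℕ) (γ : Gn n → A) : A := ∑ x ∈ Finset.univ.filter (isX l), γ x * AA l γ x

theorem EE_X {l : ℕ} (h : l ∣ n) (γ : Gn n → A) (I : Submodule A A) (hR : QR γ)
    (hI : ChI l γ I) (y : Gn n) (hy : isX l y) {w : ℤ} {v : A}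
    (hv : v ∈ BB l γ I w) :
    EE l γ * (γ y * v) - γ y * (EE l γ * v) - γ y * v ∈ BB l γ I (w + wtg l y - 1) := by
  have key : EE l γ * (γ y * v) - γ y * (EE l γ * v) - γ y * v =
      ∑ x ∈ Finset.univ.filter (isX l), (γ x * (AA l γ x * (γ y * v)) -
        γ y * (γ x * (AA l γ x * v)) - (if x = y then (1 : ℂ) else 0) • (γ x * v)) := by
    rw [Finset.sum_sub_distrib, Finset.sum_sub_distrib]
    congr 1
    · unfold EE
      simp only [Finset.sum_mul, Finset.mul_sum, mul_assoc]
    · simp only [ite_smul, one_smul, zero_smul]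
      rw [Finset.sum_ite_eq', if_pos]
      simpa using hy
  rw [key]
  refine Submodule.sum_mem _ fun x hx => ?_
  have hx : isX l x := by simpa using hx
  have h1 := BB_mul l γ I (UU_gen l γ x) (AA_comm h γ I hR hI x y hx hy hv)
  have h2 := BB_mul l γ I (VV_le_UU l γ le_rfl _ (comm_VV l γ hR (VV_gen l γ x) (VV_gen l γ y)))
    (AA_BB h γ I hR hI x hx hv)
  have h1 := BB_mono l γ I (show _ ≤ w + wtg l y - 1 by omega) h1
  have h2 := BB_mono l γ I (show _ ≤ w + wtg l y - 1 by omega) h2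
  have := Submodule.add_mem _ h1 (Submodule.smul_mem _ (sg x.1 y.1) h2)
  convert this using 1
  simp only [sub_mul, mul_sub, smul_sub, smul_mul_assoc, mul_smul_comm, smul_smul, sg_sq, one_smul,
    mul_assoc]
  abel

theorem EE_G {l : ℕ} (h : l ∣ n) (hl : 0 < l) (γ : Gn n → A) (I : Submodule A A) (hR : QR γ)
    (hI : ChI l γ I) (a : Bool) (i j : Fin n) (k : ℕ)
    (hi : ps l i = l - 1) (hj : ps l j = 0) {w : ℤ} {v : A}
    (hv : v ∈ BB l γ I w) :
    EE l γ * (gM γ (l + k) a i j * v) - gM γ (l + k) a i j * (EE l γ * v) ∈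
      BB l γ I (w + (2 * k + 1) - 1) := by
  have key : EE l γ * (gM γ (l + k) a i j * v) - gM γ (l + k) a i j * (EE l γ * v) =
      ∑ x ∈ Finset.univ.filter (isX l), (γ x * (AA l γ x * (gM γ (l + k) a i j * v)) -
        gM γ (l + k) a i j * (γ x * (AA l γ x * v))) := by
    rw [Finset.sum_sub_distrib]
    unfold EE
    simp only [Finset.sum_mul, Finset.mul_sum, mul_assoc]
  rw [key]
  refine Submodule.sum_mem _ fun x hx => ?_
  have hx : isX l x := by simpa using hx
  have h2 := BB_mul l γ I (VV_le_UU l γ le_rfl _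
    (comm_VV l γ hR (VV_gen l γ x) (G_VV hl γ a i j k hi hj))) (AA_BB h γ I hR hI x hx hv)
  have h2 := BB_mono l γ I (show _ ≤ w + (2 * k + 1) - 1 by omega) h2
  have := Submodule.smul_mem _ (sg x.1 a) h2
  convert this using 1
  rw [← mul_assoc (AA l γ x), AA_G h γ hR (l + k) a i j hi hj hl x hx]
  simp only [sub_mul, mul_sub, smul_sub, smul_mul_assoc, mul_smul_comm, smul_smul, sg_sq, one_smul,
    mul_assoc]

theorem TW_BB {l : ℕ} (hl : 0 < l) (γ : Gn n → A) (I : Submodule A A) {w : ℤ} {s : ℕ} {u : A}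
    (hu : TW l γ w s u) : u ∈ BB l γ I w := by
  induction hu with
  | one => exact UU_le_BB l γ I _ (VV_le_UU l γ le_rfl _ (VV_one l γ))
  | X w s u d hd hu ih =>
    rw [add_comm]; exact BB_mul l γ I (UU_gen l γ d) ih
  | G w s u a i j k hk hi hj hu ih =>
    rw [add_comm]; exact BB_mul l γ I (VV_le_UU l γ le_rfl _ (G_VV hl γ a i j k hi hj)) ih

theorem EE_TW {l : ℕ} (h : l ∣ n) (hl : 0 < l) (γ : Gn n → A) (I : Submodule A A) (hR : QR γ)
    (hI : ChI l γ I) {w : ℤ} {s : ℕ} {u : A} (hu : TW l γ w s u) :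
    EE l γ * u - (s : ℂ) • u ∈ BB l γ I (w - 1) := by
  induction hu with
  | one =>
    simp only [CharP.cast_eq_zero, zero_smul, sub_zero]
    unfold EE
    rw [Finset.sum_mul]
    refine Submodule.sum_mem _ fun x hx => ?_
    rw [mul_assoc]
    refine I_le_BB l γ I _ (I_mul _ (AA_I h γ I x (by simpa using hx) ?_))
    intro d hd
    rw [mul_one]; exact hI d hd
  | X w s u d hd hu ih =>
    have h1 := EE_X h γ I hR hI d hd (TW_BB hl γ I hu)
    have h2 := BB_mul l γ I (UU_gen l γ d) ih
    have h2 := BB_mono l γ I (show _ ≤ w + wtg l d - 1 by omega) h2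
    have := Submodule.add_mem _ h1 h2
    convert this using 1
    rw [mul_sub, mul_smul_comm]
    push_cast
    rw [add_smul, one_smul]
    abel
  | G w s u a i j k hk hi hj hu ih =>
    have h1 := EE_G h hl γ I hR hI a i j k hi hj (TW_BB hl γ I hu)
    have h2 := BB_mul l γ I (VV_le_UU l γ le_rfl _ (G_VV hl γ a i j k hi hj)) ih
    have h2 := BB_mono l γ I (show _ ≤ w + (2 * k + 1) - 1 by omega) h2
    have := Submodule.add_mem _ h1 h2
    convert this using 1
    rw [mul_sub, mul_smul_comm]
    abel

/-- The invariants. -/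
def Invt (l : ℕ) (γ : Gn n → A) (I : Submodule A A) (v : A) : Prop :=
  ∀ d : Gn n, ps l d.2.2 < ps l d.2.1 → (γ d - chg l d • 1) * v ∈ I

/-- The proposed generators. -/
def GS (l : ℕ) (γ : Gn n → A) : Set A :=
  {x | ∃ (a : Bool) (i j : Fin n) (k : ℕ), k < l ∧ ps l i = l - 1 ∧ ps l j = 0 ∧
    x = gM γ (l + k) a i j}

theorem TW_zero {l : ℕ} (hl : 0 < l) (γ : Gn n → A) (I : Submodule A A) (hR : QR γ)
    (hI : ChI l γ I) {w : ℤ} {s : ℕ} {u : A} (hu : TW l γ w s u) (hs : s = 0) :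
    u ∈ Algebra.adjoin ℂ (GS l γ) ∧ Invt l γ I u := by
  induction hu with
  | one => exact ⟨Subalgebra.one_mem _, fun d hd => by rw [mul_one]; exact hI d hd⟩
  | X w s u d hd hu ih => omega
  | G w s u a i j k hk hi hj hu ih =>
    obtain ⟨h1, h2⟩ := ih hs
    refine ⟨Subalgebra.mul_mem _ (Algebra.subset_adjoin ⟨a, i, j, k, hk, hi, hj, rfl⟩) h1, ?_⟩
    intro d hd
    rw [← mul_assoc, m_G' γ hR (l + k) a i j hi hj hl d hd, smul_mul_assoc, mul_assoc]
    exact I_smulC _ (I_mul _ (h2 d hd))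

theorem TS_zero {l : ℕ} (hl : 0 < l) (γ : Gn n → A) (I : Submodule A A) (hR : QR γ)
    (hI : ChI l γ I) {w : ℤ} {u : A} (hu : u ∈ TS l γ w 0) :
    u ∈ Algebra.adjoin ℂ (GS l γ) ∧ Invt l γ I u := by
  unfold TS at hu
  induction hu using Submodule.span_induction with
  | mem x hx =>
    obtain ⟨w', -, s', hs, hx⟩ := hx
    exact TW_zero hl γ I hR hI hx (by omega)
  | zero => exact ⟨Subalgebra.zero_mem _, fun d _ => by rw [mul_zero]; exact I.zero_mem⟩
  | add x y _ _ hx hy =>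
    exact ⟨Subalgebra.add_mem _ hx.1 hy.1, fun d hd => by
      rw [mul_add]; exact I.add_mem (hx.2 d hd) (hy.2 d hd)⟩
  | smul c x _ hx =>
    exact ⟨Subalgebra.smul_mem _ hx.1 c, fun d hd => by
      rw [mul_smul_comm]; exact I_smulC _ (hx.2 d hd)⟩

theorem EE_TS {l : ℕ} (h : l ∣ n) (hl : 0 < l) (γ : Gn n → A) (I : Submodule A A) (hR : QR γ)
    (hI : ChI l γ I) {w : ℤ} {s : ℕ} {u : A} (hu : u ∈ TS l γ w (s + 1)) :
    EE l γ * u - ((s + 1 : ℕ) : ℂ) • u ∈ TS l γ w s ⊔ BB l γ I (w - 1) := by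
  unfold TS at hu
  induction hu using Submodule.span_induction with
  | mem x hx =>
    obtain ⟨w', hw, s', hs, hx⟩ := hx
    have h1 := BB_mono l γ I (show w' - 1 ≤ w - 1 by omega) (EE_TW h hl γ I hR hI hx)
    rcases Nat.lt_or_ge s s' with h2 | h2
    · have : s' = s + 1 := by omega
      subst this
      exact Submodule.mem_sup_right h1
    · have h3 : x ∈ TS l γ w s := Submodule.subset_span ⟨w', hw, s', h2, hx⟩
      have := Submodule.add_mem _ (Submodule.mem_sup_right (S := TS l γ w s) h1)
        (Submodule.mem_sup_left (Submodule.smul_mem _ ((s' : ℂ) - ((s + 1 : ℕ) : ℂ)) h3))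
      convert this using 1
      rw [sub_smul]; abel
  | zero => simp
  | add x y _ _ hx hy =>
    have := Submodule.add_mem _ hx hy
    convert this using 1
    rw [mul_add, smul_add]; abel
  | smul c x _ hx =>
    have := Submodule.smul_mem _ c hx
    convert this using 1
    rw [mul_smul_comm, smul_sub, smul_comm]

theorem EE_BB {l : ℕ} (h : l ∣ n) (γ : Gn n → A) (I : Submodule A A) (hR : QR γ)
    (hI : ChI l γ I) {w : ℤ} {v : A} (hv : v ∈ BB l γ I w) : EE l γ * v ∈ BB l γ I w := by
  unfold EE
  rw [Finset.sum_mul]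
  refine Submodule.sum_mem _ fun x hx => ?_
  rw [mul_assoc]
  have := BB_mul l γ I (UU_gen l γ x) (AA_BB h γ I hR hI x (by simpa using hx) hv)
  exact BB_mono l γ I (by omega) this

theorem EE_Inv {l : ℕ} (h : l ∣ n) (γ : Gn n → A) (I : Submodule A A) {v : A}
    (hv : Invt l γ I v) : EE l γ * v ∈ I := by
  unfold EE
  rw [Finset.sum_mul]
  refine Submodule.sum_mem _ fun x hx => ?_
  rw [mul_assoc]
  exact I_mul _ (AA_I h γ I x (by simpa using hx) hv)

theorem descend {l : ℕ} (h : l ∣ n) (hl : 0 < l) (γ : Gn n → A) (I : Submodule A A) (hR : QR γ)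
    (hI : ChI l γ I) {w : ℤ} {v : A} (hv : Invt l γ I v) (s : ℕ) :
    v ∈ TS l γ w s ⊔ BB l γ I (w - 1) → v ∈ TS l γ w 0 ⊔ BB l γ I (w - 1) := by
  induction s with
  | zero => exact id
  | succ s ih =>
    intro hs
    apply ih
    obtain ⟨u, hu, b, hb, e⟩ := Submodule.mem_sup.1 hs
    have h1 := EE_TS h hl γ I hR hI hu
    have h2 : EE l γ * v ∈ TS l γ w s ⊔ BB l γ I (w - 1) :=
      Submodule.mem_sup_right (I_le_BB l γ I _ (EE_Inv h γ I hv))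
    have h3 : EE l γ * b ∈ TS l γ w s ⊔ BB l γ I (w - 1) :=
      Submodule.mem_sup_right (EE_BB h γ I hR hI hb)
    have h4 : b ∈ TS l γ w s ⊔ BB l γ I (w - 1) := Submodule.mem_sup_right hb
    have hne : ((s + 1 : ℕ) : ℂ) ≠ 0 := by exact_mod_cast Nat.succ_ne_zero s
    have h5 := Submodule.smul_mem _ (((s + 1 : ℕ) : ℂ)⁻¹)
      (Submodule.sub_mem _ (Submodule.sub_mem _ h2 h3) h1)
    have h6 := Submodule.add_mem _ h5 h4
    convert h6 using 1
    have : EE l γ * v - EE l γ * b - (EE l γ * u - ((s + 1 : ℕ) : ℂ) • u) =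
        ((s + 1 : ℕ) : ℂ) • u := by
      rw [← e, mul_add]; abel
    rw [this, smul_smul, inv_mul_cancel₀ hne, one_smul, e]

theorem main_abs {l : ℕ} (h : l ∣ n) (hl : 0 < l) (γ : Gn n → A) (I : Submodule A A) (hR : QR γ)
    (hI : ChI l γ I) (N : ℕ) : ∀ (w : ℤ) (v : A), w < N → v ∈ BB l γ I w → Invt l γ I v →
    ∃ z ∈ Algebra.adjoin ℂ (GS l γ), v - z ∈ I := by
  induction N with
  | zero =>
    intro w v hw hv _
    exact ⟨0, Subalgebra.zero_mem _, by
      rw [sub_zero]; exact BB_neg l γ I hR hI (by simpa using hw) hv⟩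
  | succ N ih =>
    intro w v hw hv hinv
    have h1 := span_lem hl h γ I hR hI (N + 1) w hw hv
    have h2 : v ∈ TS l γ w w.toNat ⊔ BB l γ I (w - 1) :=
      sup_le_sup (TT_le_TS l γ w) le_sup_right h1
    have h3 := descend h hl γ I hR hI hinv _ h2
    obtain ⟨u, hu, b, hb, e⟩ := Submodule.mem_sup.1 h3
    obtain ⟨h4, h5⟩ := TS_zero hl γ I hR hI hu
    have hbI : Invt l γ I b := by
      intro d hd
      have := I.sub_mem (hinv d hd) (h5 d hd)
      rw [← e] at this
      simpa [mul_add] using this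
    obtain ⟨z, hz, hbz⟩ := ih (w - 1) b (by push_cast at hw; omega) hb hbI
    refine ⟨u + z, Subalgebra.add_mem _ h4 hz, ?_⟩
    rw [← e]
    simpa using hbz

end abstractA

/-! # Part B: instantiation for `U(Q(n))` -/

/-- The generators of `U(Q(n))`. -/
def gU (n : ℕ) : Gn n → UQ n := fun d => if d.1 then Uf d.2.1 d.2.2 else Ue d.2.1 d.2.2

theorem Uee {n : ℕ} (i j k m : Fin n) : Ue i j * Ue k m - Ue k m * Ue i j =
    kd j k • Ue i m - kd m i • Ue k j := by
  have := RingQuot.mkAlgHom_rel ℂ (QRel.ee i j k m)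
  simp only [map_sub, map_mul, map_smul] at this
  exact this
theorem Uef {n : ℕ} (i j k m : Fin n) : Ue i j * Uf k m - Uf k m * Ue i j =
    kd j k • Uf i m - kd m i • Uf k j := by
  have := RingQuot.mkAlgHom_rel ℂ (QRel.ef i j k m)
  simp only [map_sub, map_mul, map_smul] at this
  exact this
theorem Uff {n : ℕ} (i j k m : Fin n) : Uf i j * Uf k m + Uf k m * Uf i j =
    kd j k • Ue i m + kd m i • Ue k j := by
  have := RingQuot.mkAlgHom_rel ℂ (QRel.ff i j k m)
  simp only [map_add, map_mul, map_smul] at this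
  exact this

theorem ff_aux {A : Type*} [Ring A] [Algebra ℂ A] (x y u v : A) (c d : ℂ)
    (e : x + y = c • u + d • v) : x = (-1 : ℂ) • y + c • u - (-d) • v := by
  rw [neg_smul, neg_smul, one_smul, sub_neg_eq_add, add_assoc, ← e]; abel

theorem QR_gU (n : ℕ) : QR (gU n) := by
  intro α i j β k m
  cases α <;> cases β <;> simp only [gU, sg, Bool.and_true, Bool.and_false, Bool.false_and,
    Bool.true_and, if_true, if_false, Bool.xor_true, Bool.xor_false, Bool.false_xor,
    Bool.not_true, Bool.not_false, one_smul, one_mul, Bool.false_eq_true, neg_mul]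
  · rw [add_sub_assoc, ← Uee]; abel
  · rw [add_sub_assoc, ← Uef]; abel
  · rw [add_sub_assoc, ← neg_sub (kd m i • Uf k j), ← Uef]; abel
  · exact ff_aux _ _ _ _ _ _ (Uff i j k m)

theorem gM_gU (n : ℕ) (M : ℕ) : ∀ (i j : Fin n), gM (gU n) M false i j = eU M i j ∧
    gM (gU n) M true i j = fU M i j := by
  induction M with
  | zero =>
    intro i j
    simp [gM, eU, fU, efU, Algebra.algebraMap_eq_smul_one]
  | succ M ih =>
    intro i j
    unfold eU fU at *
    simp only [gM, efU, Bool.not_true, Bool.not_false]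
    simp only [fun i j => (ih i j).1, fun i j => (ih i j).2]
    simp [gU]

theorem mem_UU (n l : ℕ) (y : UQ n) : ∃ w : ℤ, y ∈ UU l (gU n) w := by
  obtain ⟨x, rfl⟩ := RingQuot.mkAlgHom_surjective ℂ (QRel n) y
  induction x using FreeAlgebra.induction with
  | grade0 r =>
    refine ⟨0, ?_⟩
    rw [AlgHom.commutes, Algebra.algebraMap_eq_smul_one]
    exact Submodule.smul_mem _ _ (VV_le_UU l _ le_rfl _ (VV_one l _))
  | grade1 g =>
    cases g with
    | E i j => exact ⟨_, UU_gen l (gU n) (false, i, j)⟩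
    | F i j => exact ⟨_, UU_gen l (gU n) (true, i, j)⟩
  | mul a b ha hb =>
    obtain ⟨w, ha⟩ := ha
    obtain ⟨w', hb⟩ := hb
    rw [map_mul]
    exact ⟨_, UU_mul l _ ha hb⟩
  | add a b ha hb =>
    obtain ⟨w, ha⟩ := ha
    obtain ⟨w', hb⟩ := hb
    rw [map_add]
    exact ⟨max w w', Submodule.add_mem _ (UU_mono l _ (le_max_left _ _) ha)
      (UU_mono l _ (le_max_right _ _) hb)⟩

theorem ps_bidx {n l : ℕ} (h : l ∣ n) (p : Fin (n / l)) (a : Fin l) :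
    ps l (bidx h p a) = a.val := by
  simp [ps, bidx, Nat.mul_add_mod, Nat.mod_eq_of_lt a.isLt]

theorem exists_bidx {n l : ℕ} (h : l ∣ n) (hl : 0 < l) (i : Fin n) :
    ∃ (p : Fin (n / l)) (a : Fin l), i = bidx h p a := by
  refine ⟨⟨i.val / l, Nat.div_lt_div_of_lt_of_dvd h i.isLt⟩, ⟨i.val % l, Nat.mod_lt _ hl⟩, ?_⟩
  apply Fin.ext
  simp [bidx, Nat.div_add_mod]

theorem chg_bidx {n l : ℕ} (h : l ∣ n) (hl : 0 < l) (p q : Fin (n / l)) (a b : Fin l)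
    (hab : b.val < a.val) : chg l (false, bidx h p a, bidx h q b) =
      if a.val = b.val + 1 ∧ p = q then 1 else 0 := by
  unfold chg
  simp only [ps_bidx, hab, true_and]
  congr 1
  apply propext
  simp only [bidx]
  constructor
  · intro e
    have ha := a.isLt
    have h1 : (l * p.val + a.val) / l = p.val := by
      rw [Nat.mul_add_div hl, Nat.div_eq_of_lt ha, add_zero]
    have h2 : (l * q.val + b.val + 1) / l = q.val := by
      rw [add_assoc, Nat.mul_add_div hl,
        Nat.div_eq_of_lt (show b.val + 1 < l by omega), add_zero]
    have hpq : p.val = q.val := by rw [← h1, ← h2, e]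
    have hpq' : p = q := Fin.ext hpq
    subst hpq'
    exact ⟨by omega, rfl⟩
  · rintro ⟨e, rfl⟩
    omega

theorem ChI_gU {n l : ℕ} (h : l ∣ n) (hl : 0 < l) : ChI l (gU n) (Ichi n l h) := by
  rintro ⟨β, r, c⟩ hd
  simp only at hd
  obtain ⟨p, a, rfl⟩ := exists_bidx h hl r
  obtain ⟨q, b, rfl⟩ := exists_bidx h hl c
  rw [ps_bidx, ps_bidx] at hd
  apply Submodule.subset_span
  refine ⟨p, q, a, b, hd, ?_⟩
  cases β with
  | false =>
    left
    rw [chg_bidx h hl p q a b hd, Algebra.algebraMap_eq_smul_one]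
    simp [gU]
  | true =>
    right
    simp [gU, chg]

theorem neg_aux {A : Type*} [Ring A] [Algebra ℂ A] (c d : ℂ) (x y : A) :
    (-c) • d • ((-x) * y) = c • d • (x * y) := by simp

theorem sigma_gM {n : ℕ} (σ : UQ n →ₐ[ℂ] UQ n)
    (hσe : ∀ i j : Fin n, σ (Ue i j) = Ue i j)
    (hσf : ∀ i j : Fin n, σ (Uf i j) = -Uf i j) (M : ℕ) : ∀ (a : Bool) (i j : Fin n),
    σ (gM (gU n) M a i j) = sg true a • gM (gU n) M a i j := by
  induction M with
  | zero => intro a i j; cases a <;> simp [gM, sg]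
  | succ M ih =>
    intro a i j
    have e1 : ∀ i k, σ (gU n (false, i, k)) = gU n (false, i, k) := fun i k => by
      simp [gU, hσe]
    have e2 : ∀ i k, σ (gU n (true, i, k)) = -gU n (true, i, k) := fun i k => by
      simp [gU, hσf]
    have e3 : sg true (!a) = - sg true a := by cases a <;> simp [sg]
    simp only [gM, map_add, map_sum, map_mul, map_smul, ih, e1, e2, e3, smul_add, Finset.smul_sum,
      mul_smul_comm]
    congr 1
    refine Finset.sum_congr rfl fun k _ => ?_
    rw [smul_comm]
    exact neg_aux _ _ _ _

theorem Wcond_gM {n l : ℕ} (h : l ∣ n) (hl : 0 < l) (σ : UQ n →ₐ[ℂ] UQ n)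
    (hσe : ∀ i j : Fin n, σ (Ue i j) = Ue i j)
    (hσf : ∀ i j : Fin n, σ (Uf i j) = -Uf i j) (M : ℕ) (a : Bool) (i j : Fin n)
    (hi : ps l i = l - 1) (hj : ps l j = 0) : Wcond h σ (gM (gU n) M a i j) := by
  intro p q r s hrs
  have h1 := m_G (gU n) (QR_gU n) M a i j hi hj hl (false, bidx h p r, bidx h q s)
    (by simpa [ps_bidx] using hrs)
  have h2 := m_G (gU n) (QR_gU n) M a i j hi hj hl (true, bidx h p r, bidx h q s)
    (by simpa [ps_bidx] using hrs)
  have e1 : gU n (false, bidx h p r, bidx h q s) = Ue (bidx h p r) (bidx h q s) := rfl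
  have e2 : gU n (true, bidx h p r, bidx h q s) = Uf (bidx h p r) (bidx h q s) := rfl
  rw [e1] at h1
  rw [e2] at h2
  constructor
  · rw [h1]; simp [sg]
  · rw [h2, sigma_gM σ hσe hσf, smul_mul_assoc, sub_self]; exact Submodule.zero_mem _

theorem Invt_of_Wcond {n l : ℕ} (h : l ∣ n) (hl : 0 < l) (σ : UQ n →ₐ[ℂ] UQ n) (y : UQ n)
    (hy : Wcond h σ y) : Invt l (gU n) (Ichi n l h) y := by
  intro d hd
  have h0 := ChI_gU h hl d hd
  obtain ⟨β, r, c⟩ := d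
  simp only at hd
  obtain ⟨p, a, rfl⟩ := exists_bidx h hl r
  obtain ⟨q, b, rfl⟩ := exists_bidx h hl c
  rw [ps_bidx, ps_bidx] at hd
  obtain ⟨h1, h2⟩ := hy p q a b hd
  cases β with
  | false =>
    have h3 := Submodule.add_mem _ h1 (I_mul y h0)
    convert h3 using 1
    have e1 : gU n (false, bidx h p a, bidx h q b) = Ue (bidx h p a) (bidx h q b) := rfl
    rw [e1]
    simp only [mul_sub, sub_mul, mul_smul_comm, smul_mul_assoc, one_mul, mul_one]
    abel
  | true =>
    have h3 := Submodule.add_mem _ h2 (I_mul (σ y) h0)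
    convert h3 using 1
    have e1 : gU n (true, bidx h p a, bidx h q b) = Uf (bidx h p a) (bidx h q b) := rfl
    have e2 : chg l (true, bidx h p a, bidx h q b) = 0 := by simp [chg]
    rw [e1, e2]
    simp

/-- Let `l ∣ n`.  The elements `π(e^{(l+k-1)}_{lp, l(q-1)+1})` and
`π(f^{(l+k-1)}_{lp, l(q-1)+1})`, for `1 ≤ p,q ≤ n/l` and `1 ≤ k ≤ l`, lie in the finite
W-algebra `W_χ` and generate `W_χ` as an algebra (every element of `W_χ` is `π(z)` for
some `z` in the subalgebra of `U(Q(n))` generated by these elements; recall that the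
product of `W_χ` is `π(y₁)·π(y₂) = π(y₁y₂)`).  Here `σ` is the parity involution of
`U(Q(n))`, used to express super-commutators. -/
theorem statement3 (n l : ℕ) (hn : 0 < n) (hl : 0 < l) (h : l ∣ n)
    (σ : UQ n →ₐ[ℂ] UQ n)
    (hσe : ∀ i j : Fin n, σ (Ue i j) = Ue i j)
    (hσf : ∀ i j : Fin n, σ (Uf i j) = -Uf i j) :
    (∀ (p q : Fin (n / l)) (k : Fin l),
        piq n l h (eU (l + k.val) (bidx h p ⟨l - 1, by omega⟩) (bidx h q ⟨0, hl⟩)) ∈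
          WchiSet n l h σ ∧
        piq n l h (fU (l + k.val) (bidx h p ⟨l - 1, by omega⟩) (bidx h q ⟨0, hl⟩)) ∈
          WchiSet n l h σ) ∧
    (∀ w ∈ WchiSet n l h σ,
      ∃ z ∈ Algebra.adjoin ℂ
          { x : UQ n | ∃ (p q : Fin (n / l)) (k : Fin l),
              x = eU (l + k.val) (bidx h p ⟨l - 1, by omega⟩) (bidx h q ⟨0, hl⟩) ∨
              x = fU (l + k.val) (bidx h p ⟨l - 1, by omega⟩) (bidx h q ⟨0, hl⟩) },
        piq n l h z = w) := by
  refine ⟨?_, ?_⟩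
  · intro p q k
    have hi : ps l (bidx h p ⟨l - 1, by omega⟩) = l - 1 := ps_bidx h p _
    have hj : ps l (bidx h q ⟨0, hl⟩) = 0 := ps_bidx h q _
    refine ⟨⟨_, ?_, rfl⟩, ⟨_, ?_, rfl⟩⟩
    · rw [← (gM_gU n _ _ _).1]
      exact Wcond_gM h hl σ hσe hσf _ _ _ _ hi hj
    · rw [← (gM_gU n _ _ _).2]
      exact Wcond_gM h hl σ hσe hσf _ _ _ _ hi hj
  · rintro w ⟨y, hy, rfl⟩
    obtain ⟨w0, hw0⟩ := mem_UU n l y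
    obtain ⟨z, hz, hyz⟩ := main_abs h hl (gU n) (Ichi n l h) (QR_gU n) (ChI_gU h hl)
      (w0.toNat + 1) w0 y (by push_cast; omega) (UU_le_BB l _ _ _ hw0)
      (Invt_of_Wcond h hl σ y hy)
    refine ⟨z, ?_, ?_⟩
    · refine Algebra.adjoin_mono ?_ hz
      rintro _ ⟨a, i, j, k, hk, hi, hj, rfl⟩
      obtain ⟨p, r, rfl⟩ := exists_bidx h hl i
      obtain ⟨q, s, rfl⟩ := exists_bidx h hl j
      rw [ps_bidx] at hi hj
      have hr : r = ⟨l - 1, Nat.sub_lt hl Nat.one_pos⟩ := Fin.ext hi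
      have hs : s = ⟨0, hl⟩ := Fin.ext hj
      rw [hr, hs]
      refine ⟨p, q, ⟨k, hk⟩, ?_⟩
      cases a with
      | false => left; exact (gM_gU n _ _ _).1
      | true => right; exact (gM_gU n _ _ _).2
    · symm
      exact (Submodule.Quotient.eq _).2 hyz
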